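/- (Berra–Carena–Pradolini, fractional integral case) Let 0<α<n, 1≤p<n/α and let q be defined by 1/q = 1/p − α/n. If u and v are weights on ℝ^n such that u ∈ A_1 and v^{q/p} ∈ A_1, then there exists a positive constant C such that for every f and every t>0, (uv^{q/p})({x ∈ ℝ^n : I_α(fv)(x)/v(x) > t})^{1/q} ≤ (C/t) (∫_{ℝ^n} |f(x)|^p u(x)^{p/q} v(x) dx)^{1/p}, where uv^{q/p} denotes the weight u·v^{q/p}. -/

import Mathlib

open MeasureTheory ENNReal Set

noncomputable section

/-- Euclidean space `ℝ^n`. -/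
abbrev ESp (n : ℕ) := EuclideanSpace ℝ (Fin n)

/-- An axis-parallel cube with positive finite side length. -/
def IsCube {n : ℕ} (Q : Set (ESp n)) : Prop :=
  ∃ (c : Fin n → ℝ) (h : ℝ), 0 < h ∧ Q = {x : ESp n | ∀ i, c i ≤ x i ∧ x i ≤ c i + h}

/-- The measure `w(E) = ∫_E w` associated to a weight `w`. -/
def wMeas {n : ℕ} (w : ESp n → ℝ) (E : Set (ESp n)) : ℝ≥0∞ :=
  ∫⁻ x in E, ENNReal.ofReal (w x)

/-- A weight: a nonnegative locally integrable function, positive (and finite) a.e. -/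
def IsWeight {n : ℕ} (w : ESp n → ℝ) : Prop :=
  Measurable w ∧ (∀ x, 0 ≤ w x) ∧ (∀ᵐ x ∂(volume : Measure (ESp n)), 0 < w x) ∧
    ∀ Q : Set (ESp n), IsCube Q → wMeas w Q < ⊤

/-- `C` is an admissible `A₁` constant for `w`. -/
def A1Const {n : ℕ} (w : ESp n → ℝ) (C : ℝ≥0∞) : Prop :=
  ∀ Q : Set (ESp n), IsCube Q →
    (volume Q)⁻¹ * wMeas w Q ≤ C * essInf (fun x => ENNReal.ofReal (w x)) (volume.restrict Q)

/-- The Muckenhoupt class `A₁`. -/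
def IsA1 {n : ℕ} (w : ESp n → ℝ) : Prop := ∃ C : ℝ≥0∞, C < ⊤ ∧ A1Const w C

/-- The Muckenhoupt class `A_p`, `1 < p < ∞`. -/
def IsAp {n : ℕ} (w : ESp n → ℝ) (p : ℝ) : Prop :=
  ∃ C : ℝ≥0∞, C < ⊤ ∧ ∀ Q : Set (ESp n), IsCube Q →
    ((volume Q)⁻¹ * wMeas w Q) *
      ((volume Q)⁻¹ * ∫⁻ x in Q, ENNReal.ofReal (w x) ^ (1 - p / (p - 1))) ^ (p - 1) ≤ C

/-- The class `A_∞ = ⋃_{p ≥ 1} A_p`. -/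
def IsAinfty {n : ℕ} (w : ESp n → ℝ) : Prop :=
  IsA1 w ∨ ∃ p : ℝ, 1 < p ∧ IsAp w p

/-- The Hardy–Littlewood maximal function (over cubes). -/
def maxFn {n : ℕ} (f : ESp n → ℝ) (x : ESp n) : ℝ≥0∞ :=
  ⨆ (Q : Set (ESp n)) (_ : IsCube Q) (_ : x ∈ Q),
    (volume Q)⁻¹ * ∫⁻ y in Q, ENNReal.ofReal |f y|

/-- The Fujii–Wilson `A_∞` constant. -/
def FW {n : ℕ} (w : ESp n → ℝ) : ℝ≥0∞ :=
  ⨆ (Q : Set (ESp n)) (_ : IsCube Q),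
    (wMeas w Q)⁻¹ * ∫⁻ x in Q, maxFn (Q.indicator w) x

/-- The weighted weak `L^{q,∞}(w)` quasinorm of `g`. -/
def wnorm {n : ℕ} (g : ESp n → ℝ≥0∞) (q : ℝ) (w : ESp n → ℝ) : ℝ≥0∞ :=
  ⨆ (t : ℝ) (_ : 0 < t), ENNReal.ofReal t * (wMeas w {x | ENNReal.ofReal t < g x}) ^ (1 / q)

/-- The weighted `L¹(w)` norm. -/
def L1norm {n : ℕ} (f : ESp n → ℝ) (w : ESp n → ℝ) : ℝ≥0∞ :=
  ∫⁻ x, ENNReal.ofReal (|f x| * w x)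

/-- The fractional maximal operator `M_α`. -/
def fracM {n : ℕ} (α : ℝ) (f : ESp n → ℝ) (x : ESp n) : ℝ≥0∞ :=
  ⨆ (Q : Set (ESp n)) (_ : IsCube Q) (_ : x ∈ Q),
    ((volume Q) ^ (1 - α / (n : ℝ)))⁻¹ * ∫⁻ y in Q, ENNReal.ofReal |f y|

/-- The fractional integral (Riesz potential) `I_α`. -/
def fracI {n : ℕ} (α : ℝ) (f : ESp n → ℝ) (x : ESp n) : ℝ :=
  ∫ y, f y / dist x y ^ ((n : ℝ) - α)

/-- The multi(sub)linear maximal function `𝓜`. -/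
def multiM {n m : ℕ} (f : Fin m → ESp n → ℝ) (x : ESp n) : ℝ≥0∞ :=
  ⨆ (Q : Set (ESp n)) (_ : IsCube Q) (_ : x ∈ Q),
    ∏ i, (volume Q)⁻¹ * ∫⁻ y in Q, ENNReal.ofReal |f i y|

/-- The multi(sub)linear fractional maximal operator `𝓜_α`. -/
def multiMα {n m : ℕ} (α : ℝ) (f : Fin m → ESp n → ℝ) (x : ESp n) : ℝ≥0∞ :=
  ⨆ (Q : Set (ESp n)) (_ : IsCube Q) (_ : x ∈ Q),
    ∏ i, ((volume Q) ^ (1 - α / ((m : ℝ) * (n : ℝ))))⁻¹ * ∫⁻ y in Q, ENNReal.ofReal |f i y|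

/-- The multilinear fractional integral `𝓘_α`. -/
def multiIα {n m : ℕ} (α : ℝ) (f : Fin m → ESp n → ℝ) (x : ESp n) : ℝ :=
  ∫ y : Fin m → ESp n, (∏ i, f i (y i)) / (∑ i, dist x (y i)) ^ ((m : ℝ) * (n : ℝ) - α)

/-- The multilinear class `A_{(1,…,1)}`. -/
def A11 {n m : ℕ} (w : Fin m → ESp n → ℝ) : Prop :=
  ∃ C : ℝ≥0∞, C < ⊤ ∧ ∀ Q : Set (ESp n), IsCube Q →
    ((volume Q)⁻¹ * ∫⁻ x in Q, ENNReal.ofReal (∏ i, w i x ^ ((m : ℝ)⁻¹))) ^ (m : ℝ) *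
      ∏ i, (essInf (fun x => ENNReal.ofReal (w i x)) (volume.restrict Q))⁻¹ ≤ C


namespace BCP

lemma pow_chain (g : ℤ → ℝ≥0∞) (θ : ℝ≥0∞) (hg : ∀ k, g k ≤ θ * g (k+1)) (k : ℤ) (j : ℕ) :
    g k ≤ θ ^ j * g (k + j) := by
  induction j with
  | zero => simp
  | succ j ih =>
    refine ih.trans ?_
    rw [pow_succ, mul_assoc]
    gcongr
    have := hg (k + j)
    push_cast
    rwa [← add_assoc]

lemma geo_sum_low (g : ℤ → ℝ≥0∞) (θ : ℝ≥0∞) (hg : ∀ k, g k ≤ θ * g (k+1))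
    (ρ : ℝ≥0∞) (s : ℝ) (hs : 0 < s) :
    ∑' k, (if g k ≤ ρ then (g k / ρ) ^ s else 0) ≤ (1 - θ ^ s)⁻¹ := by
  rw [ENNReal.tsum_eq_iSup_sum]
  refine iSup_le fun T => ?_
  rw [← Finset.sum_filter]
  set T' := T.filter (fun k => g k ≤ ρ) with hT'
  rcases T'.eq_empty_or_nonempty with h | h
  · simp [h]
  set K := T'.max' h
  have hK : K ∈ T' := T'.max'_mem h
  have hKρ : g K ≤ ρ := by
    rw [hT', Finset.mem_filter] at hK; exact hK.2
  have h1 : ∀ k ∈ T', (g k / ρ) ^ s ≤ (θ ^ s) ^ ((K - k).toNat) := by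
    intro k hk
    have hkK : k ≤ K := T'.le_max' k hk
    have h2 := pow_chain g θ hg k (K - k).toNat
    have h3 : k + ((K - k).toNat : ℤ) = K := by omega
    rw [h3] at h2
    have h4 : g k / ρ ≤ θ ^ (K - k).toNat := by
      refine ENNReal.div_le_of_le_mul ?_
      exact h2.trans (by gcongr)
    refine (ENNReal.rpow_le_rpow h4 hs.le).trans ?_
    rw [← ENNReal.rpow_natCast, ← ENNReal.rpow_natCast, ← ENNReal.rpow_mul, ← ENNReal.rpow_mul, mul_comm]
  refine (Finset.sum_le_sum h1).trans ?_
  have hinj : Set.InjOn (fun k : ℤ => (K - k).toNat) (T' : Set ℤ) := by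
    intro a ha b hb hab
    have := T'.le_max' a ha
    have := T'.le_max' b hb
    simp only at hab
    omega
  rw [← Finset.sum_image (f := fun j => (θ ^ s) ^ j) hinj, ← ENNReal.tsum_geometric]
  exact ENNReal.sum_le_tsum _

lemma geo_sum_high (g : ℤ → ℝ≥0∞) (θ : ℝ≥0∞) (hg : ∀ k, g k ≤ θ * g (k+1))
    (ρ : ℝ≥0∞) (s : ℝ) (hs : 0 < s) :
    ∑' k, (if ρ ≤ g k then (ρ / g k) ^ s else 0) ≤ (1 - θ ^ s)⁻¹ := by
  rw [ENNReal.tsum_eq_iSup_sum]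
  refine iSup_le fun T => ?_
  rw [← Finset.sum_filter]
  set T' := T.filter (fun k => ρ ≤ g k) with hT'
  rcases T'.eq_empty_or_nonempty with h | h
  · simp [h]
  set K := T'.min' h
  have hK : K ∈ T' := T'.min'_mem h
  have hKρ : ρ ≤ g K := by
    rw [hT', Finset.mem_filter] at hK; exact hK.2
  have h1 : ∀ k ∈ T', (ρ / g k) ^ s ≤ (θ ^ s) ^ ((k - K).toNat) := by
    intro k hk
    have hkK : K ≤ k := T'.min'_le k hk
    have h2 := pow_chain g θ hg K (k - K).toNat
    have h3 : K + ((k - K).toNat : ℤ) = k := by omega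
    rw [h3] at h2
    have h4 : ρ / g k ≤ θ ^ (k - K).toNat := by
      refine ENNReal.div_le_of_le_mul ?_
      exact hKρ.trans h2
    refine (ENNReal.rpow_le_rpow h4 hs.le).trans ?_
    rw [← ENNReal.rpow_natCast, ← ENNReal.rpow_natCast, ← ENNReal.rpow_mul, ← ENNReal.rpow_mul, mul_comm]
  refine (Finset.sum_le_sum h1).trans ?_
  have hinj : Set.InjOn (fun k : ℤ => (k - K).toNat) (T' : Set ℤ) := by
    intro a ha b hb hab
    have := T'.min'_le a ha
    have := T'.min'_le b hb
    simp only at hab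
    omega
  rw [← Finset.sum_image (f := fun j => (θ ^ s) ^ j) hinj, ← ENNReal.tsum_geometric]
  exact ENNReal.sum_le_tsum _

/-- weight measure -/
abbrev W {n : ℕ} (u : (Fin n → ℝ) → ℝ≥0∞) : Measure (Fin n → ℝ) := volume.withDensity u

/-- A1 on sup-norm balls -/
def A1s {n : ℕ} (u : (Fin n → ℝ) → ℝ≥0∞) (C : ℝ≥0∞) : Prop :=
  ∀ (x : Fin n → ℝ) (r : ℝ), 0 < r → ∀ᵐ y, y ∈ Metric.closedBall x r →
    W u (Metric.closedBall x r) ≤ C * volume (Metric.closedBall x r) * u y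

/-- half-open cube -/
def hc {n : ℕ} (c : Fin n → ℝ) (h : ℝ) : Set (Fin n → ℝ) :=
  Set.pi univ fun i => Ico (c i) (c i + h)

lemma vol_hc {n : ℕ} (c : Fin n → ℝ) (h : ℝ) : volume (hc c h) = ENNReal.ofReal h ^ n := by
  rw [hc, Real.volume_pi_Ico]; simp

lemma meas_hc {n : ℕ} (c : Fin n → ℝ) (h : ℝ) : MeasurableSet (hc c h) :=
  MeasurableSet.univ_pi fun _ => measurableSet_Ico

lemma vol_ball {n : ℕ} (x : Fin n → ℝ) (r : ℝ) (hr : 0 ≤ r) :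
    volume (Metric.closedBall x r) = ENNReal.ofReal (2 * r) ^ n := by
  rw [Real.volume_pi_closedBall _ hr, ENNReal.ofReal_pow (by positivity)]; simp

lemma ball_ae_hc {n : ℕ} (x : Fin n → ℝ) (r : ℝ) (hr : 0 ≤ r) :
    hc (fun i => x i - r) (2 * r) =ᵐ[volume] Metric.closedBall x r := by
  have h1 : Metric.closedBall x r = Icc (fun i => x i - r) (fun i => x i - r + 2 * r) := by
    rw [closedBall_pi _ hr, ← Set.pi_univ_Icc]
    congr 1
    ext i
    rw [Real.closedBall_eq_Icc]
    ring_nf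
  rw [h1]
  exact Measure.univ_pi_Ico_ae_eq_Icc

lemma A1s_sub {n : ℕ} {u : (Fin n → ℝ) → ℝ≥0∞} {C : ℝ≥0∞} (hu : Measurable u) (h : A1s u C)
    (x : Fin n → ℝ) (r : ℝ) (hr : 0 < r) (E : Set (Fin n → ℝ)) (hE : MeasurableSet E)
    (hEB : E ⊆ Metric.closedBall x r) :
    volume E * W u (Metric.closedBall x r) ≤ C * volume (Metric.closedBall x r) * W u E := by
  rw [withDensity_apply _ hE, ← lintegral_const_mul _ hu, mul_comm, ← setLIntegral_const]
  refine setLIntegral_mono_ae (by fun_prop) ?_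
  filter_upwards [h x r hr] with y hy hyE
  exact hy (hEB hyE)

lemma A1s_sub_hc {n : ℕ} {u : (Fin n → ℝ) → ℝ≥0∞} {C : ℝ≥0∞} (hu : Measurable u) (h : A1s u C)
    (c : Fin n → ℝ) (r : ℝ) (hr : 0 < r) (E : Set (Fin n → ℝ)) (hE : MeasurableSet E)
    (hEB : E ⊆ hc c r) :
    volume E * W u (hc c r) ≤ C * volume (hc c r) * W u E := by
  have h1 := ball_ae_hc (fun i => c i + r / 2) (r / 2) (by positivity)
  have h2 : hc (fun i => (c i + r / 2) - r / 2) (2 * (r / 2)) = hc c r := by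
    congr 1
    · ext i; ring
    · ring
  rw [h2] at h1
  have h3 : hc c r =ᵐ[W u] Metric.closedBall (fun i => c i + r / 2) (r / 2) :=
    (withDensity_absolutelyContinuous _ _).ae_eq h1
  have h4 : hc c r ⊆ Metric.closedBall (fun i => c i + r / 2) (r / 2) := by
    rw [closedBall_pi _ (by positivity)]
    refine Set.pi_mono fun i _ => ?_
    rw [Real.closedBall_eq_Icc]
    refine Ico_subset_Icc_self.trans (Icc_subset_Icc (by linarith) (by linarith))
  rw [measure_congr h1, measure_congr h3]
  exact A1s_sub hu h _ _ (by positivity) E hE (hEB.trans h4)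

end BCP

namespace BCP

lemma half_lemma {X : Type*} [MeasurableSpace X] (μ ν : Measure X) (C : ℝ≥0∞) 
    (Q E : Set X) (hE : MeasurableSet E) (hEQ : E ⊆ Q)
    (h0 : μ Q ≠ 0) (ht : μ Q ≠ ⊤) (hνt : ν Q ≠ ⊤)
    (hA : μ (Q \ E) * ν Q ≤ C * μ Q * ν (Q \ E)) (hh : 2 * μ E ≤ μ Q) :
    ν E ≤ (1 - (2 * C)⁻¹) * ν Q := by
  have hEt : μ E ≠ ⊤ := ne_top_of_le_ne_top ht (measure_mono hEQ)
  have hsum : μ E + μ (Q \ E) = μ Q := by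
    rw [add_comm]; exact measure_diff_add_inter_aux hE hEQ
  have hsumν : ν E + ν (Q \ E) = ν Q := by
    rw [add_comm]; exact measure_diff_add_inter_aux hE hEQ
  have h1 : μ Q ≤ 2 * μ (Q \ E) := by
    have : μ E ≤ μ (Q \ E) := by
      have h3 : μ E + μ E ≤ μ E + μ (Q \ E) := by rw [hsum, ← two_mul]; exact hh
      exact (ENNReal.add_le_add_iff_left hEt).1 h3
    rw [← hsum, two_mul]; gcongr
  have h2 : ν Q ≤ 2 * C * ν (Q \ E) := by
    have : μ Q * ν Q ≤ μ Q * (2 * C * ν (Q \ E)) := by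
      calc μ Q * ν Q ≤ 2 * μ (Q \ E) * ν Q := by gcongr
        _ = 2 * (μ (Q \ E) * ν Q) := by ring
        _ ≤ 2 * (C * μ Q * ν (Q \ E)) := by gcongr
        _ = _ := by ring
    exact (ENNReal.mul_le_mul_iff_right h0 ht).1 this
  have h3 : (2 * C)⁻¹ * ν Q ≤ ν (Q \ E) := by
    rw [mul_comm, ← div_eq_mul_inv]
    refine ENNReal.div_le_of_le_mul ?_
    rwa [mul_comm]
  have hEν : ν (Q \ E) ≠ ⊤ := ne_top_of_le_ne_top hνt (measure_mono sdiff_subset)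
  have h4 : ν E = ν Q - ν (Q \ E) := by
    rw [← hsumν, ENNReal.add_sub_cancel_right hEν]
  rw [h4, ENNReal.sub_mul (fun _ _ => hνt), one_mul]
  exact tsub_le_tsub_left h3 _
where
  measure_diff_add_inter_aux {X : Type _} [MeasurableSpace X] {μ : Measure X} {Q E : Set X}
    (hE : MeasurableSet E) (hEQ : E ⊆ Q) : μ (Q \ E) + μ E = μ Q := by
    have := measure_sdiff_add_inter (μ := μ) Q hE
    rwa [inter_eq_self_of_subset_right hEQ] at this

/-- index of dyadic cell -/
def idx {n : ℕ} (c : Fin n → ℝ) (h : ℝ) (j : ℕ) (x : Fin n → ℝ) : Fin n → ℤ :=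
  fun i => ⌊(x i - c i) * 2 ^ j / h⌋

def cel {n : ℕ} (c : Fin n → ℝ) (h : ℝ) (j : ℕ) (m : Fin n → ℤ) : Set (Fin n → ℝ) :=
  {y | idx c h j y = m}

lemma cel_eq {n : ℕ} (c : Fin n → ℝ) (h : ℝ) (hh : 0 < h) (j : ℕ) (m : Fin n → ℤ) :
    cel c h j m = hc (fun i => c i + m i * (h / 2 ^ j)) (h / 2 ^ j) := by
  ext y
  simp only [cel, idx, hc, mem_ofPred_eq, Set.mem_pi, mem_univ, true_imp_iff, mem_Ico, funext_iff]
  refine forall_congr' fun i => ?_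
  rw [Int.floor_eq_iff]
  have h2 : (0:ℝ) < 2 ^ j := by positivity
  rw [le_div_iff₀ hh, div_lt_iff₀ hh]
  have e1 : (m i : ℝ) * (h / 2 ^ j) = (m i * h) / 2 ^ j := by ring
  have e2 : c i + (m i : ℝ) * (h / 2 ^ j) + h / 2 ^ j = c i + ((m i + 1) * h) / 2 ^ j := by ring
  rw [e2, e1]
  have e3 : c i + m i * h / 2 ^ j ≤ y i ↔ m i * h / 2 ^ j ≤ y i - c i := by
    constructor <;> intro <;> linarith
  have e4 : y i < c i + (m i + 1) * h / 2 ^ j ↔ y i - c i < (m i + 1) * h / 2 ^ j := by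
    constructor <;> intro <;> linarith
  rw [e3, e4, div_le_iff₀ h2, lt_div_iff₀ h2]

lemma idx_mono {n : ℕ} (c : Fin n → ℝ) (h : ℝ) (j k : ℕ) (hjk : j ≤ k) (x y : Fin n → ℝ)
    (hxy : idx c h k x = idx c h k y) : idx c h j x = idx c h j y := by
  induction k, hjk using Nat.le_induction with
  | base => exact hxy
  | succ k hk ih =>
    apply ih
    have key : ∀ z : Fin n → ℝ, ∀ i, idx c h k z i = (idx c h (k+1) z i) / (2 : ℕ) := by
      intro z i
      simp only [idx]
      rw [← Int.floor_div_natCast]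
      congr 1
      rw [pow_succ]; push_cast; ring
    ext i
    rw [key, key, hxy]

lemma key_step {n : ℕ} (c : Fin n → ℝ) (h : ℝ) (hh : 0 < h) (O : Set (Fin n → ℝ)) (hO : IsOpen O)
    (τ : ℝ≥0∞) (hτ1 : τ < 1) (hτ0 : τ ≠ 0) (hs : volume (O ∩ hc c h) ≤ τ * volume (hc c h)) :
    ∃ S : Set (Set (Fin n → ℝ)), S.Countable ∧ S.PairwiseDisjoint id ∧
      (∀ s ∈ S, ∃ c' h', 0 < h' ∧ s = hc c' h') ∧ (∀ s ∈ S, s ⊆ hc c h) ∧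
      O ∩ hc c h ⊆ ⋃ s ∈ S, s ∧
      (∀ s ∈ S, volume (O ∩ s) ≤ τ * 2 ^ n * volume s) ∧
      (∀ s ∈ S, volume s ≤ τ⁻¹ * volume (O ∩ s)) := by
  classical
  let good : ℕ → (Fin n → ℝ) → Prop := fun j x =>
    τ * volume (cel c h j (idx c h j x)) < volume (O ∩ cel c h j (idx c h j x))
  have hc0 : hc c h = cel c h 0 0 := by
    rw [cel_eq c h hh]; simp
  have volcel : ∀ j m, volume (cel c h j m) = ENNReal.ofReal (h / 2 ^ j) ^ n := by
    intro j m; rw [cel_eq c h hh, vol_hc]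
  have hex : ∀ x ∈ O, ∃ j, good j x := by
    intro x hx
    obtain ⟨ε, hε, hb⟩ := Metric.isOpen_iff.1 hO x hx
    obtain ⟨j, hj⟩ : ∃ j : ℕ, h / 2 ^ j < ε := by
      obtain ⟨j, hj⟩ := pow_unbounded_of_one_lt (h / ε) (one_lt_two)
      refine ⟨j, ?_⟩
      rw [div_lt_iff₀ (by positivity)]
      rw [div_lt_iff₀ hε] at hj
      linarith
    refine ⟨j, ?_⟩
    have hsub : cel c h j (idx c h j x) ⊆ O := by
      refine Subset.trans ?_ hb
      intro y hy
      have hx' : x ∈ cel c h j (idx c h j x) := rfl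
      rw [cel_eq c h hh] at hy hx'
      simp only [hc, Set.mem_pi, mem_univ, true_imp_iff, mem_Ico] at hy hx'
      rw [Metric.mem_ball, dist_pi_lt_iff hε]
      intro i
      have := hy i
      have := hx' i
      rw [Real.dist_eq, abs_lt]
      constructor <;> linarith
    have hv0 : volume (cel c h j (idx c h j x)) ≠ 0 := by
      rw [volcel]; exact pow_ne_zero _ (by simp; positivity)
    have hvt : volume (cel c h j (idx c h j x)) ≠ ⊤ := by
      rw [volcel]; exact ENNReal.pow_ne_top ENNReal.ofReal_ne_top
    show _ < _
    rw [inter_eq_self_of_subset_right hsub]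
    calc _ < 1 * volume (cel c h j (idx c h j x)) := (ENNReal.mul_lt_mul_iff_left hv0 hvt).2 hτ1
      _ = _ := one_mul _
  let J : (Fin n → ℝ) → ℕ := fun x => if hx : ∃ j, good j x then Nat.find hx else 0
  have hJ : ∀ x ∈ O, good (J x) x := by
    intro x hx
    simp only [J, dif_pos (hex x hx)]
    exact Nat.find_spec (hex x hx)
  have hJm : ∀ x ∈ O, ∀ j < J x, ¬ good j x := by
    intro x hx j hj
    simp only [J, dif_pos (hex x hx)] at hj
    exact Nat.find_min (hex x hx) hj
  let Sx : (Fin n → ℝ) → Set (Fin n → ℝ) := fun x => cel c h (J x) (idx c h (J x) x)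
  have idx0 : ∀ x ∈ hc c h, idx c h 0 x = 0 := by
    intro x hx; rw [hc0] at hx; exact hx
  have hgood_congr : ∀ j x y, idx c h j x = idx c h j y → (good j x ↔ good j y) := by
    intro j x y hxy; simp only [good, hxy]
  have hsubQ : ∀ x ∈ hc c h, Sx x ⊆ hc c h := by
    intro x hx y hy
    have : idx c h (J x) y = idx c h (J x) x := hy
    have h2 := idx_mono c h 0 (J x) (Nat.zero_le _) _ _ this
    rw [hc0]; show _ = _; rw [h2]; exact idx0 x hx
  refine ⟨Sx '' (O ∩ hc c h), ?_, ?_, ?_, ?_, ?_, ?_, ?_⟩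
  · refine Set.Countable.mono (s₂ := Set.range fun a : ℕ × (Fin n → ℤ) => cel c h a.1 a.2) ?_
      (Set.countable_range _)
    rintro _ ⟨x, _, rfl⟩
    exact ⟨(J x, idx c h (J x) x), rfl⟩
  · rintro _ ⟨x, hx, rfl⟩ _ ⟨y, hy, rfl⟩ hne
    simp only [Function.onFun, id]
    rw [Set.disjoint_left]
    intro z hz1 hz2
    apply hne
    have e1 : idx c h (J x) z = idx c h (J x) x := hz1
    have e2 : idx c h (J y) z = idx c h (J y) y := hz2
    have hle : ∀ x y : Fin n → ℝ, x ∈ O → y ∈ O → idx c h (J x) z = idx c h (J x) x →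
        idx c h (J y) z = idx c h (J y) y → J y ≤ J x := by
      intro x y hx hy e1 e2
      by_contra hlt
      push Not at hlt
      have e3 := idx_mono c h _ _ hlt.le _ _ e2
      exact hJm y hy _ hlt ((hgood_congr _ _ _ (e1.symm.trans e3)).1 (hJ x hx))
    have hJJ : J x = J y := le_antisymm (hle y x hy.1 hx.1 e2 e1) (hle x y hx.1 hy.1 e1 e2)
    simp only [Sx]
    rw [hJJ] at e1 ⊢
    rw [← e1, ← e2]
  · rintro _ ⟨x, hx, rfl⟩
    exact ⟨_, _, by positivity, cel_eq c h hh _ _⟩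
  · rintro _ ⟨x, hx, rfl⟩
    exact hsubQ x hx.2
  · intro x hx
    simp only [mem_iUnion]
    exact ⟨Sx x, ⟨x, hx, rfl⟩, rfl⟩
  · rintro _ ⟨x, hx, rfl⟩
    have hJ0 : J x ≠ 0 := by
      intro h0
      have := hJ x hx.1
      rw [h0] at this
      simp only [good, idx0 x hx.2, ← hc0] at this
      exact absurd this (not_lt.2 hs)
    obtain ⟨k, hk⟩ := Nat.exists_eq_succ_of_ne_zero hJ0
    have h1 := hJm x hx.1 k (by omega)
    simp only [good, not_lt] at h1
    have h2 : Sx x ⊆ cel c h k (idx c h k x) := by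
      intro y hy
      exact idx_mono c h k (J x) (by omega) _ _ hy
    refine (measure_mono (inter_subset_inter_right _ h2)).trans (h1.trans ?_)
    rw [mul_assoc]
    gcongr
    simp only [Sx, volcel, hk]
    rw [← mul_pow]
    gcongr
    rw [← ENNReal.ofReal_ofNat 2, ← ENNReal.ofReal_mul (by norm_num)]
    apply le_of_eq
    congr 1
    rw [Nat.succ_eq_add_one, pow_succ]
    field_simp
  · rintro _ ⟨x, hx, rfl⟩
    have h1 := hJ x hx.1
    simp only [good] at h1
    rw [← ENNReal.div_eq_inv_mul, ENNReal.le_div_iff_mul_le (Or.inl hτ0) (Or.inl hτ1.ne_top), mul_comm]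
    exact h1.le

lemma Ainf {n : ℕ} (hn : 0 < n) {u : (Fin n → ℝ) → ℝ≥0∞} {C : ℝ≥0∞} (hu : Measurable u) (h : A1s u C)
    (hfin : ∀ c r, W u (hc c r) ≠ ⊤) (j : ℕ) (c : Fin n → ℝ) (r : ℝ) (hr : 0 < r)
    (O : Set (Fin n → ℝ)) (hO : IsOpen O)
    (hs : volume (O ∩ hc c r) ≤ ((2 ^ (n + 1))⁻¹) ^ j * volume (hc c r)) :
    W u (O ∩ hc c r) ≤ (1 - (2 * C)⁻¹) ^ j * W u (hc c r) := by
  induction j generalizing c r with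
  | zero => simpa using measure_mono inter_subset_right
  | succ j ih =>
    set η : ℝ≥0∞ := (2 ^ (n + 1))⁻¹ with hη
    have hη0 : η ≠ 0 := by simp [hη]
    have hηt : η ≠ ⊤ := by simp [hη]
    have h22 : (2:ℝ≥0∞) ^ n ≠ 0 := by simp
    have h22t : (2:ℝ≥0∞) ^ n ≠ ⊤ := by simp
    have hη2 : η = (2 ^ n)⁻¹ * 2⁻¹ := by
      rw [hη, pow_succ, ENNReal.mul_inv (by simp) (by simp)]
    have hη1 : η ≤ 1 := by rw [hη]; simp [ENNReal.inv_le_one]; exact one_le_pow₀ (by norm_num)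
    set τ : ℝ≥0∞ := η ^ j * (2 ^ n)⁻¹ with hτ
    have hτ0 : τ ≠ 0 := by simp [hτ, hη0]
    have hτ1 : τ < 1 := by
      rw [hτ]
      calc η ^ j * (2 ^ n)⁻¹ ≤ 1 * (2 ^ n)⁻¹ := by
            gcongr
            exact pow_le_one' hη1 j
        _ = (2 ^ n)⁻¹ := one_mul _
        _ < 1 := by
            rw [ENNReal.inv_lt_one]; exact one_lt_pow₀ (by norm_num) (by omega)
    have hs' : volume (O ∩ hc c r) ≤ τ * volume (hc c r) := by
      refine hs.trans ?_
      rw [hτ, pow_succ]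
      gcongr
      rw [hη2]
      calc _ ≤ ((2:ℝ≥0∞) ^ n)⁻¹ * 1 := by gcongr; simp
        _ = _ := mul_one _
    obtain ⟨S, hSc, hSd, hSh, hSQ, hScov, hS1, hS2⟩ := key_step c r hr O hO τ hτ1 hτ0 hs'
    have hSm : ∀ s ∈ S, MeasurableSet s := by
      intro s hs
      obtain ⟨c', h', _, rfl⟩ := hSh s hs
      exact meas_hc _ _
    set F : Set (Fin n → ℝ) := ⋃ s ∈ S, s with hF
    have hFm : MeasurableSet F := MeasurableSet.biUnion hSc hSm
    have hFQ : F ⊆ hc c r := iUnion₂_subset hSQ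
    have hvol0 : volume (hc c r) ≠ 0 := by rw [vol_hc]; exact pow_ne_zero _ (by simp; positivity)
    have hvolt : volume (hc c r) ≠ ⊤ := by rw [vol_hc]; exact ENNReal.pow_ne_top ENNReal.ofReal_ne_top
    have hcnt := hSc.to_subtype
    have hvF : volume F ≤ τ⁻¹ * volume (O ∩ hc c r) := by
      rw [hF, measure_biUnion hSc (f := fun s => s) hSd hSm]
      calc ∑' s : S, volume (s : Set (Fin n → ℝ)) ≤ ∑' s : S, τ⁻¹ * volume (O ∩ (s : Set (Fin n → ℝ))) :=
            ENNReal.tsum_le_tsum fun s => hS2 s s.2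
        _ = τ⁻¹ * ∑' s : S, volume (O ∩ (s : Set (Fin n → ℝ))) := ENNReal.tsum_mul_left
        _ = τ⁻¹ * volume (⋃ s ∈ S, O ∩ s) := by
            rw [measure_biUnion hSc (f := fun s => O ∩ s) (hSd.mono fun s => inter_subset_right)
              (fun s hs => hO.measurableSet.inter (hSm s hs))]
        _ ≤ _ := by
            gcongr
            exact iUnion₂_subset fun s hs => inter_subset_inter_right _ (hSQ s hs)
    have hF2 : 2 * volume F ≤ volume (hc c r) := by
      calc 2 * volume F ≤ 2 * (τ⁻¹ * (η ^ (j+1) * volume (hc c r))) := by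
            gcongr; exact hvF.trans (by gcongr)
        _ = volume (hc c r) := by
            have : τ⁻¹ * η ^ (j + 1) = 2⁻¹ := by
              have : η ^ (j+1) = τ * 2⁻¹ := by rw [pow_succ, hτ]; nth_rewrite 2 [hη2]; ring
              rw [this, ← mul_assoc, ENNReal.inv_mul_cancel hτ0 hτ1.ne_top, one_mul]
            rw [← mul_assoc, ← mul_assoc, mul_assoc 2, this, ENNReal.mul_inv_cancel (by simp) (by simp), one_mul]
    have hFu := half_lemma volume (W u) C (hc c r) F hFm hFQ hvol0 hvolt (hfin c r)
        (A1s_sub_hc hu h c r hr _ ((meas_hc c r).diff hFm) sdiff_subset) hF2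
    have hOF : O ∩ hc c r ⊆ ⋃ s ∈ S, (O ∩ s) := by
      intro x hx
      obtain ⟨s, hs, hxs⟩ := mem_iUnion₂.1 (hScov hx)
      exact mem_iUnion₂.2 ⟨s, hs, hx.1, hxs⟩
    calc W u (O ∩ hc c r) ≤ W u (⋃ s ∈ S, (O ∩ s)) := measure_mono hOF
      _ ≤ ∑' s : S, W u (O ∩ (s : Set (Fin n → ℝ))) := measure_biUnion_le _ hSc _
      _ ≤ ∑' s : S, (1 - (2 * C)⁻¹) ^ j * W u (s : Set (Fin n → ℝ)) := by
          refine ENNReal.tsum_le_tsum fun s => ?_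
          obtain ⟨c', h', hh', hs⟩ := hSh s s.2
          have h5 := hS1 s s.2
          rw [hs] at h5 ⊢
          refine ih c' h' hh' (h5.trans (le_of_eq ?_))
          rw [hτ, mul_assoc (η ^ j), ENNReal.inv_mul_cancel h22 h22t, mul_one]
      _ = (1 - (2 * C)⁻¹) ^ j * W u F := by
          rw [ENNReal.tsum_mul_left, hF, measure_biUnion hSc (f := fun s => s) hSd hSm]
      _ ≤ _ := by
          rw [pow_succ, mul_assoc]
          gcongr

end BCP

namespace BCP

lemma exists_gamma (L θ : ℝ≥0∞) (hL0 : L ≠ 0) (hL : L ≠ ⊤) (hθ : θ < 1) (b : ℝ) (hb : 0 < b) :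
    ∃ γ : ℝ, 0 < γ ∧ γ < b ∧ L ^ γ * θ < 1 := by
  lift L to NNReal using hL
  lift θ to NNReal using hθ.ne_top
  have hL0' : L ≠ 0 := by simpa using hL0
  have hθ' : θ < 1 := by exact_mod_cast hθ
  have h1 : Filter.Tendsto (fun γ : ℝ => (L : ℝ) ^ γ * θ) (nhds 0) (nhds ((L : ℝ) ^ (0:ℝ) * θ)) := by
    refine Filter.Tendsto.mul_const _ ?_
    exact (Real.continuous_const_rpow (by simpa using hL0')).tendsto 0
  rw [Real.rpow_zero, one_mul] at h1
  have h2 := (h1.eventually (gt_mem_nhds (show (θ : ℝ) < 1 by exact_mod_cast hθ'))).filter_mono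
    (nhdsWithin_le_nhds (s := Ioi 0))
  have h3 : ∀ᶠ γ in nhdsWithin (0:ℝ) (Ioi 0), γ ∈ Ioo 0 b := Ioo_mem_nhdsGT hb
  obtain ⟨γ, hγ, hγ2⟩ := (h2.and h3).exists
  refine ⟨γ, hγ2.1, hγ2.2, ?_⟩
  rw [← ENNReal.coe_rpow_of_ne_zero hL0']
  have : L ^ γ * θ < 1 := by exact_mod_cast hγ
  exact_mod_cast this

lemma layer (L : ℝ≥0∞) (hL1 : 1 < L) (γ : ℝ) (hγ : 0 < γ) (z : ℝ≥0∞) (hz : z ≠ ⊤) :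
    z ^ γ ≤ L ^ γ + ∑' j : ℕ, (L ^ γ) ^ (j + 2) * (if L ^ (j + 1) < z then 1 else 0) := by
  by_cases h : z ≤ L
  · exact (ENNReal.rpow_le_rpow h hγ.le).trans le_self_add
  have hex : ∃ m : ℕ, z ≤ L ^ m := by
    have := ENNReal.tendsto_pow_atTop_nhds_top_iff.2 hL1
    have h2 := (ENNReal.tendsto_nhds_top_iff_nnreal.1 this z.toNNReal).exists
    obtain ⟨m, hm⟩ := h2
    rw [ENNReal.coe_toNNReal hz] at hm
    exact ⟨m, hm.le⟩
  classical
  set m := Nat.find hex with hm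
  have h1 : z ≤ L ^ m := Nat.find_spec hex
  have hm2 : 2 ≤ m := by
    by_contra hlt
    push Not at hlt
    apply h
    refine h1.trans ?_
    calc L ^ m ≤ L ^ 1 := pow_le_pow_right₀ hL1.le (by omega)
      _ = L := pow_one L
  obtain ⟨j, hj⟩ := Nat.exists_eq_add_of_le' hm2
  have h3 : L ^ (j + 1) < z := by
    have := Nat.find_min hex (m := j + 1) (by omega)
    exact not_le.1 this
  refine le_trans ?_ (le_add_left (ENNReal.le_tsum j))
  rw [if_pos h3, mul_one]
  rw [hj] at h1
  refine (ENNReal.rpow_le_rpow h1 hγ.le).trans (le_of_eq ?_)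
  rw [← ENNReal.rpow_natCast, ← ENNReal.rpow_natCast, ← ENNReal.rpow_mul, ← ENNReal.rpow_mul, mul_comm]

lemma theta_lt {C : ℝ≥0∞} (hC : C ≠ ⊤) : 1 - (2 * C)⁻¹ < 1 := by
  refine ENNReal.sub_lt_self (by simp) (by simp) ?_
  simp [ENNReal.mul_eq_top, hC]

lemma RH {n : ℕ} (hn : 0 < n) {u : (Fin n → ℝ) → ℝ≥0∞} {C : ℝ≥0∞} (hu : Measurable u)
    (hC : C ≠ ⊤) (h : A1s u C)
    (hfin : ∀ c r, W u (hc c r) ≠ ⊤) (b : ℝ) (hb : 0 < b) :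
    ∃ γ : ℝ, 0 < γ ∧ γ < b ∧ ∃ K : ℝ≥0∞, K ≠ ⊤ ∧ ∀ V : (Fin n → ℝ) → ℝ≥0∞, Measurable V →
      (∀ x, V x ≠ ⊤) → ∀ (c : Fin n → ℝ) (r : ℝ), 0 < r → ∀ a : ℝ≥0∞, a ≠ 0 → a ≠ ⊤ →
      W V (hc c r) = a * volume (hc c r) →
      ∫⁻ y in hc c r, u y * V y ^ γ ≤ K * W u (hc c r) * a ^ γ := by
  set L : ℝ≥0∞ := 2 ^ (n + 1) with hLdef
  have hL1 : 1 < L := one_lt_pow₀ (by norm_num) (by omega)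
  have hL : L ≠ ⊤ := by simp [hLdef]
  have hL0 : L ≠ 0 := by simp [hLdef]
  set θ : ℝ≥0∞ := 1 - (2 * C)⁻¹ with hθ
  obtain ⟨γ, hγ0, hγb, hγ⟩ := exists_gamma L θ hL0 hL (theta_lt hC) b hb
  have hLγt : L ^ γ ≠ ⊤ := ENNReal.rpow_ne_top_of_nonneg hγ0.le hL
  refine ⟨γ, hγ0, hγb, L ^ γ + (L ^ γ) ^ 2 * (1 - L ^ γ * θ)⁻¹, ?_, ?_⟩
  · refine ENNReal.add_ne_top.2 ⟨hLγt, ENNReal.mul_ne_top (ENNReal.pow_ne_top hLγt) ?_⟩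
    rw [Ne, ENNReal.inv_eq_top, tsub_eq_zero_iff_le, not_le]
    exact hγ
  intro V hV hVt c r hr a ha0 hat hVa
  have hvol0 : volume (hc c r) ≠ 0 := by rw [vol_hc]; exact pow_ne_zero _ (by simp; positivity)
  have hvolt : volume (hc c r) ≠ ⊤ := by rw [vol_hc]; exact ENNReal.pow_ne_top ENNReal.ofReal_ne_top
  let E : ℕ → Set (Fin n → ℝ) := fun j => {y | L ^ (j + 1) < V y / a}
  have hEm : ∀ j, MeasurableSet (E j) := fun j => measurableSet_lt (by fun_prop) (by fun_prop)
  have hEj : ∀ j, W u (E j ∩ hc c r) ≤ θ ^ j * W u (hc c r) := by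
    intro j
    have h1 : volume (E j ∩ hc c r) ≤ (L⁻¹) ^ (j + 1) * volume (hc c r) := by
      have h2 := mul_meas_ge_le_lintegral (μ := volume.restrict (hc c r)) hV (a * L ^ (j + 1))
      have h3 : volume (E j ∩ hc c r) ≤ (volume.restrict (hc c r)) {y | a * L ^ (j + 1) ≤ V y} := by
        rw [← Measure.restrict_apply (hEm j)]
        refine measure_mono fun y hy => ?_
        have hy' : L ^ (j + 1) < V y / a := hy
        rw [ENNReal.lt_div_iff_mul_lt (Or.inl ha0) (Or.inl hat), mul_comm] at hy'
        exact hy'.le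
      rw [← withDensity_apply _ (meas_hc c r), hVa, mul_assoc,
        ENNReal.mul_le_mul_iff_right ha0 hat] at h2
      refine h3.trans ?_
      rw [← ENNReal.inv_pow, ← ENNReal.div_eq_inv_mul,
        ENNReal.le_div_iff_mul_le (Or.inl (pow_ne_zero _ hL0)) (Or.inl (ENNReal.pow_ne_top hL)), mul_comm]
      exact h2
    have h4 : (L⁻¹) ^ (j + 1) * volume (hc c r) < (L⁻¹) ^ j * volume (hc c r) := by
      rw [ENNReal.mul_lt_mul_iff_left hvol0 hvolt, pow_succ]
      calc L⁻¹ ^ j * L⁻¹ < L⁻¹ ^ j * 1 := by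
            refine (ENNReal.mul_lt_mul_iff_right (pow_ne_zero _ (by simpa using hL))
              (ENNReal.pow_ne_top (by simpa using hL0))).2 ?_
            rwa [ENNReal.inv_lt_one]
        _ = _ := mul_one _
    obtain ⟨O, hEO, hO, hOv⟩ := Set.exists_isOpen_lt_of_lt _ _ (h1.trans_lt h4)
    have h5 := Ainf hn hu h hfin j c r hr O hO ((measure_mono inter_subset_left).trans hOv.le)
    refine (measure_mono ?_).trans h5
    exact fun y hy => ⟨hEO hy, hy.2⟩
  have hpt : ∀ y, u y * V y ^ γ ≤ a ^ γ * (L ^ γ * u y + ∑' j : ℕ, (L ^ γ) ^ (j + 2) *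
      ((E j).indicator u y)) := by
    intro y
    have h1 := layer L hL1 γ hγ0 (V y / a) (ENNReal.div_ne_top (hVt y) ha0)
    have h2 : V y = a * (V y / a) := (ENNReal.mul_div_cancel ha0 hat).symm
    calc u y * V y ^ γ = a ^ γ * (u y * (V y / a) ^ γ) := by
          nth_rewrite 1 [h2]
          rw [ENNReal.mul_rpow_of_nonneg _ _ hγ0.le]; ring
      _ ≤ a ^ γ * (u y * (L ^ γ + ∑' j : ℕ, (L ^ γ) ^ (j + 2) * (if L ^ (j + 1) < V y / a then 1 else 0))) := by
          gcongr
      _ = _ := by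
          rw [mul_add, ← ENNReal.tsum_mul_left, mul_comm (u y)]
          congr 2
          refine tsum_congr fun j => ?_
          by_cases hy : L ^ (j + 1) < V y / a
          · rw [if_pos hy, Set.indicator_of_mem (show y ∈ E j from hy)]; ring
          · rw [if_neg hy, Set.indicator_of_notMem (show y ∉ E j from hy)]; ring
  calc ∫⁻ y in hc c r, u y * V y ^ γ ≤ ∫⁻ y in hc c r, a ^ γ * (L ^ γ * u y + ∑' j : ℕ, (L ^ γ) ^ (j + 2) *
      ((E j).indicator u y)) := lintegral_mono hpt
    _ = a ^ γ * (L ^ γ * W u (hc c r) + ∑' j : ℕ, (L ^ γ) ^ (j + 2) * W u (E j ∩ hc c r)) := by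
        have hm : ∀ j, Measurable ((E j).indicator u) := fun j => hu.indicator (hEm j)
        rw [lintegral_const_mul _ (by fun_prop), lintegral_add_left (by fun_prop),
          lintegral_const_mul _ hu, lintegral_tsum (fun j => by fun_prop), withDensity_apply _ (meas_hc c r)]
        congr 3
        ext j
        rw [lintegral_const_mul _ (hm j), lintegral_indicator (hEm j),
          Measure.restrict_restrict (hEm j), withDensity_apply _ ((hEm j).inter (meas_hc c r))]
    _ ≤ a ^ γ * (L ^ γ * W u (hc c r) + ∑' j : ℕ, (L ^ γ) ^ (j + 2) * (θ ^ j * W u (hc c r))) := by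
        gcongr with j
        exact hEj j
    _ = _ := by
        have : ∀ j : ℕ, (L ^ γ) ^ (j + 2) * (θ ^ j * W u (hc c r)) =
            ((L ^ γ) ^ 2 * W u (hc c r)) * (L ^ γ * θ) ^ j := by
          intro j; rw [mul_pow]; ring
        simp_rw [this]
        rw [ENNReal.tsum_mul_left, ENNReal.tsum_geometric]
        ring

end BCP

namespace BCP

/-- dyadic-radius ball -/
def B {n : ℕ} (k : ℤ) (x : Fin n → ℝ) : Set (Fin n → ℝ) := Metric.closedBall x ((2:ℝ) ^ k)

/-- its volume -/
def m (n : ℕ) (k : ℤ) : ℝ≥0∞ := ENNReal.ofReal (2 * (2:ℝ) ^ k) ^ n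

lemma vol_B {n : ℕ} (k : ℤ) (x : Fin n → ℝ) : volume (B k x) = m n k :=
  vol_ball x _ (by positivity)

lemma m_ne_zero (n : ℕ) (k : ℤ) : m n k ≠ 0 := pow_ne_zero _ (by simp; positivity)

lemma m_ne_top (n : ℕ) (k : ℤ) : m n k ≠ ⊤ := ENNReal.pow_ne_top ENNReal.ofReal_ne_top

lemma m_succ (n : ℕ) (k : ℤ) : m n (k + 1) = 2 ^ n * m n k := by
  rw [m, m, ← mul_pow, ← ENNReal.ofReal_ofNat 2, ← ENNReal.ofReal_mul (by norm_num)]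
  congr 2
  rw [zpow_add₀ (by norm_num)]; ring

lemma meas_B {n : ℕ} (k : ℤ) (x : Fin n → ℝ) : MeasurableSet (B k x) :=
  Metric.isClosed_closedBall.measurableSet

lemma B_sub {n : ℕ} (k : ℤ) (x y : Fin n → ℝ) (h : dist y x ≤ 2 ^ k) : B k y ⊆ B (k + 1) x := by
  refine Metric.closedBall_subset_closedBall' ?_
  rw [zpow_add₀ (by norm_num)]; linarith

lemma mem_B_comm {n : ℕ} (k : ℤ) (x y : Fin n → ℝ) : y ∈ B k x ↔ x ∈ B k y := by
  simp only [B, Metric.mem_closedBall, dist_comm]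

section
variable {n : ℕ} {u : (Fin n → ℝ) → ℝ≥0∞} {C : ℝ≥0∞}

lemma W_ball_ne_top (hC : C ≠ ⊤) (h : A1s u C) (hut : ∀ x, u x ≠ ⊤) 
    (x : Fin n → ℝ) (r : ℝ) (hr : 0 < r) : W u (Metric.closedBall x r) ≠ ⊤ := by
  have h1 : volume (Metric.closedBall x r) ≠ 0 := by
    rw [vol_ball x r hr.le]; exact pow_ne_zero _ (by simp; positivity)
  have h2 : volume (Metric.closedBall x r) ≠ ⊤ := by
    rw [vol_ball x r hr.le]; exact ENNReal.pow_ne_top ENNReal.ofReal_ne_top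
  have h3 : ∃ y ∈ Metric.closedBall x r, W u (Metric.closedBall x r) ≤ C * volume (Metric.closedBall x r) * u y := by
    by_contra hcon
    push Not at hcon
    apply h1
    refine measure_mono_null ?_ (ae_iff.1 (h x r hr))
    intro y hy hy2
    exact absurd (hy2 hy) (not_le.2 (hcon y hy))
  obtain ⟨y, -, hy⟩ := h3
  exact ne_top_of_le_ne_top (ENNReal.mul_ne_top (ENNReal.mul_ne_top hC h2) (hut y)) hy

lemma W_hc_ne_top (hC : C ≠ ⊤) (h : A1s u C) (hut : ∀ x, u x ≠ ⊤) 
    (x : Fin n → ℝ) (r : ℝ) : W u (hc x r) ≠ ⊤ := by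
  refine ne_top_of_le_ne_top (W_ball_ne_top hC h hut x (max r 1) (by positivity)) (measure_mono ?_)
  intro y hy
  simp only [hc, Set.mem_pi, mem_univ, true_imp_iff, mem_Ico] at hy
  rw [Metric.mem_closedBall, dist_pi_le_iff (by positivity)]
  intro i
  have := hy i
  have := le_max_left r 1
  have := le_max_right r 1
  rw [Real.dist_eq, abs_le]
  constructor <;> linarith

lemma W_B_ne_top (hC : C ≠ ⊤) (h : A1s u C) (hut : ∀ x, u x ≠ ⊤) (k : ℤ)
    (x : Fin n → ℝ) : W u (B k x) ≠ ⊤ := W_ball_ne_top hC h hut x _ (by positivity)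

lemma W_B_ne_zero (hu : Measurable u) (hu0 : ∀ x, u x ≠ 0) (k : ℤ)
    (x : Fin n → ℝ) : W u (B k x) ≠ 0 := by
  intro h0
  have := withDensity_absolutelyContinuous' (μ := volume) hu.aemeasurable (Filter.Eventually.of_forall hu0) h0
  rw [vol_B] at this
  exact m_ne_zero n k this

lemma W_growth (hn : 0 < n) (hu : Measurable u) (hC : C ≠ ⊤) (h : A1s u C) (hut : ∀ x, u x ≠ ⊤) (k : ℤ)
    (x : Fin n → ℝ) : W u (B k x) ≤ (1 - (2 * C)⁻¹) * W u (B (k+1) x) := by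
  have hsub : B k x ⊆ B (k+1) x := B_sub k x x (by rw [dist_self]; positivity)
  refine half_lemma volume (W u) C _ _ (meas_B k x) hsub ?_ ?_ (W_B_ne_top hC h hut _ _)
    (A1s_sub hu h _ _ (by positivity) _ ((meas_B _ _).diff (meas_B _ _)) sdiff_subset) ?_
  · rw [vol_B]; exact m_ne_zero _ _
  · rw [vol_B]; exact m_ne_top _ _
  · rw [vol_B, vol_B, m_succ]
    gcongr
    exact le_self_pow₀ (by norm_num) (by omega)

lemma W_doubling (hu : Measurable u) (h : A1s u C) (k : ℤ)
    (x y : Fin n → ℝ) (hxy : y ∈ B k x) : W u (B k y) ≤ C * 2 ^ n * W u (B k x) := by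
  have h1 : W u (B k y) ≤ W u (B (k+1) x) := measure_mono (B_sub k x y hxy)
  have hsub : B k x ⊆ B (k+1) x := B_sub k x x (by rw [dist_self]; positivity)
  have h2 : volume (B k x) * W u (B (k+1) x) ≤ C * volume (B (k+1) x) * W u (B k x) :=
    A1s_sub hu h x _ (by positivity) _ (meas_B k x) hsub
  refine h1.trans ?_
  rw [vol_B, vol_B, m_succ] at h2
  have h3 : C * (2 ^ n * m n k) * W u (B k x) = m n k * (C * 2 ^ n * W u (B k x)) := by ring
  rw [h3] at h2
  exact (ENNReal.mul_le_mul_iff_right (m_ne_zero n k) (m_ne_top n k)).1 h2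

lemma W_pointwise (h : A1s u C) : ∀ᵐ x, ∀ k, W u (B k x) ≤ C * 2 ^ n * m n k * u x := by
  have h1 : ∀ᵐ z, ∀ (k : ℤ) (i : ℕ), z ∈ B (k+1) (TopologicalSpace.denseSeq (Fin n → ℝ) i) → 
      W u (B (k+1) (TopologicalSpace.denseSeq (Fin n → ℝ) i)) ≤ 
        C * volume (B (k+1) (TopologicalSpace.denseSeq (Fin n → ℝ) i)) * u z := by
    rw [ae_all_iff]; intro k
    rw [ae_all_iff]; intro i
    exact h _ _ (by positivity)
  filter_upwards [h1] with x hx k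
  obtain ⟨i, hi⟩ := (TopologicalSpace.denseRange_denseSeq (Fin n → ℝ)).exists_dist_lt x
    (show (0:ℝ) < 2 ^ k by positivity)
  have hsub := B_sub k _ x hi.le
  have hmem : x ∈ B k x := Metric.mem_closedBall_self (by positivity)
  have := hx k i (hsub hmem)
  rw [vol_B, m_succ] at this
  refine (measure_mono hsub).trans (this.trans (le_of_eq ?_))
  ring

lemma A1s_rpow (hu : Measurable u) (h : A1s u C) (s : ℝ) (hs0 : 0 ≤ s) (hs1 : s ≤ 1) :
    A1s (fun x => u x ^ s) (C ^ s) := by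
  intro x r hr
  filter_upwards [h x r hr] with y hy hyB
  have h1 := hy hyB
  have hvol0 : volume (Metric.closedBall x r) ≠ 0 := by
    rw [vol_ball x r hr.le]; exact pow_ne_zero _ (by simp; positivity)
  have hvolt : volume (Metric.closedBall x r) ≠ ⊤ := by
    rw [vol_ball x r hr.le]; exact ENNReal.pow_ne_top ENNReal.ofReal_ne_top
  have h2 := ENNReal.lintegral_mul_norm_pow_le (μ := volume.restrict (Metric.closedBall x r))
    (f := u) (g := fun _ => 1) hu.aemeasurable aemeasurable_const hs0 (sub_nonneg.2 hs1) (by ring)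
  simp only [ENNReal.one_rpow, mul_one, lintegral_const, Measure.restrict_apply_univ, one_mul] at h2
  rw [withDensity_apply _ Metric.isClosed_closedBall.measurableSet] at h1 ⊢
  refine h2.trans ?_
  calc _ ≤ (C * volume (Metric.closedBall x r) * u y) ^ s * volume (Metric.closedBall x r) ^ (1 - s) := by
        gcongr
    _ = C ^ s * (volume (Metric.closedBall x r) ^ s * volume (Metric.closedBall x r) ^ (1 - s)) * u y ^ s := by
        rw [ENNReal.mul_rpow_of_nonneg _ _ hs0, ENNReal.mul_rpow_of_nonneg _ _ hs0]; ring
    _ = _ := by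
        rw [← ENNReal.rpow_add _ _ hvol0 hvolt, add_sub_cancel, ENNReal.rpow_one]

lemma RH_B (hn : 0 < n) (hu : Measurable u)
    (hC : C ≠ ⊤) (h : A1s u C) (hut : ∀ x, u x ≠ ⊤) (b : ℝ) (hb : 0 < b) :
    ∃ γ : ℝ, 0 < γ ∧ γ < b ∧ ∃ K : ℝ≥0∞, K ≠ ⊤ ∧ ∀ V : (Fin n → ℝ) → ℝ≥0∞, Measurable V →
      (∀ x, V x ≠ ⊤) → ∀ (k : ℤ) (x : Fin n → ℝ), W V (B k x) ≠ 0 → W V (B k x) ≠ ⊤ →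
      ∫⁻ y in B k x, u y * V y ^ γ ≤ K * W u (B k x) * (W V (B k x) / m n k) ^ γ := by
  obtain ⟨γ, h1, h2, K, hK, H⟩ := RH hn hu hC h (W_hc_ne_top hC h hut) b hb
  refine ⟨γ, h1, h2, K, hK, fun V hV hVt k x hV0 hVf => ?_⟩
  have e1 := ball_ae_hc x ((2:ℝ) ^ k) (by positivity)
  have e2 : ∀ w : (Fin n → ℝ) → ℝ≥0∞, W w (hc (fun i => x i - (2:ℝ)^k) (2 * 2 ^ k)) = W w (B k x) := fun w =>
    measure_congr ((withDensity_absolutelyContinuous _ _).ae_eq e1)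
  have e3 : volume (hc (fun i => x i - (2:ℝ)^k) (2 * 2 ^ k)) = m n k := by
    rw [measure_congr e1]; exact vol_B k x
  have := H V hV hVt (fun i => x i - (2:ℝ)^k) (2 * 2 ^ k) (by positivity) (W V (B k x) / m n k)
    (ENNReal.div_ne_zero.2 ⟨hV0, m_ne_top n k⟩) (ENNReal.div_ne_top hVf (m_ne_zero n k)) (by
      rw [e2, e3, ENNReal.div_mul_cancel (m_ne_zero n k) (m_ne_top n k)])
  rw [e2, Measure.restrict_congr_set e1] at this
  exact this

end

end BCP

namespace BCP

/-- an everywhere positive finite A1 weight with constant `C` -/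
structure Wt {n : ℕ} (u : (Fin n → ℝ) → ℝ≥0∞) (C : ℝ≥0∞) : Prop where
  meas : Measurable u
  ne0 : ∀ x, u x ≠ 0
  net : ∀ x, u x ≠ ⊤
  Ct : C ≠ ⊤
  a1 : A1s u C

lemma meas_WB {n : ℕ} (g : (Fin n → ℝ) → ℝ≥0∞) (k : ℤ) : Measurable fun x => W g (B k x) := by
  have hS : MeasurableSet {z : (Fin n → ℝ) × (Fin n → ℝ) | dist z.2 z.1 ≤ (2:ℝ) ^ k} :=
    measurableSet_le (by fun_prop) (by fun_prop)
  have e : (fun x => W g (B k x)) = fun x => W g (Prod.mk x ⁻¹' {z : (Fin n → ℝ) × (Fin n → ℝ) | dist z.2 z.1 ≤ (2:ℝ) ^ k}) := by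
    funext x
    congr 1
  rw [e]
  exact measurable_measure_prodMk_left hS

lemma fubini_B {n : ℕ} (g h : (Fin n → ℝ) → ℝ≥0∞) (hg : Measurable g) (hh : Measurable h) (k : ℤ) :
    ∫⁻ x, h x * W g (B k x) = ∫⁻ y, g y * W h (B k y) := by
  have hS : MeasurableSet {z : (Fin n → ℝ) × (Fin n → ℝ) | dist z.2 z.1 ≤ (2:ℝ) ^ k} :=
    measurableSet_le (by fun_prop) (by fun_prop)
  have e1 : ∀ (g : (Fin n → ℝ) → ℝ≥0∞) x, W g (B k x) = ∫⁻ y, (B k x).indicator g y := by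
    intro g x
    rw [withDensity_apply _ (meas_B k x), lintegral_indicator (meas_B k x)]
  simp_rw [e1]
  have hm1 : ∀ x, Measurable ((B k x).indicator g) := fun x => hg.indicator (meas_B k x)
  have hm2 : ∀ x, Measurable ((B k x).indicator h) := fun x => hh.indicator (meas_B k x)
  calc ∫⁻ x, h x * ∫⁻ y, (B k x).indicator g y = ∫⁻ x, ∫⁻ y, h x * (B k x).indicator g y := by
        refine lintegral_congr fun x => ?_
        rw [lintegral_const_mul _ (hm1 x)]
    _ = ∫⁻ y, ∫⁻ x, h x * (B k x).indicator g y := by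
        refine lintegral_lintegral_swap ?_
        have : (Function.uncurry fun x y => h x * (B k x).indicator g y) =
            fun z : (Fin n → ℝ) × (Fin n → ℝ) => h z.1 *
              Set.indicator {z : (Fin n → ℝ) × (Fin n → ℝ) | dist z.2 z.1 ≤ (2:ℝ) ^ k} (fun z => g z.2) z := by
          ext z
          simp only [Function.uncurry]
          rfl
        rw [this]
        exact ((hh.comp measurable_fst).mul ((hg.comp measurable_snd).indicator hS)).aemeasurable
    _ = _ := by
        refine lintegral_congr fun y => ?_
        rw [← lintegral_const_mul _ (hm2 y)]
        refine lintegral_congr fun x => ?_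
        by_cases hxy : y ∈ B k x
        · rw [Set.indicator_of_mem hxy, Set.indicator_of_mem ((mem_B_comm k x y).1 hxy), mul_comm]
        · rw [Set.indicator_of_notMem hxy,
            Set.indicator_of_notMem (fun h => hxy ((mem_B_comm k x y).2 h)), mul_zero, mul_zero]

lemma inv_le_of_le_mul {a b c : ℝ≥0∞} (ha0 : a ≠ 0) (hat : a ≠ ⊤) (h : a ≤ c * b) :
    b⁻¹ ≤ c * a⁻¹ := by
  calc b⁻¹ = a * a⁻¹ * b⁻¹ := by rw [ENNReal.mul_inv_cancel ha0 hat, one_mul]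
    _ ≤ (c * b) * a⁻¹ * b⁻¹ := by gcongr
    _ = c * a⁻¹ * (b * b⁻¹) := by ring
    _ ≤ c * a⁻¹ * 1 := by gcongr; exact ENNReal.mul_inv_le_one b
    _ = _ := mul_one _

/-- step 1 -/
lemma a_bound {n : ℕ} (p q : ℝ) (hp : 1 ≤ p) (hpq : p < q) (f v : (Fin n → ℝ) → ℝ≥0∞) (hf : Measurable f)
    (hv : Measurable v) (hv0 : ∀ x, v x ≠ 0) (hvt : ∀ x, v x ≠ ⊤) (Cv : ℝ≥0∞) (k : ℤ) (x : Fin n → ℝ)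
    (hx : W v (B k x) ≤ Cv * m n k * v x) :
    ((v x)⁻¹ * m n k ^ (1 / p - 1 / q - 1) * W (fun y => f y * v y) (B k x)) ^ p ≤
      Cv ^ (p - 1) * ((v x)⁻¹ * m n k ^ (-(p / q)) * W (fun y => f y ^ p * v y) (B k x)) := by
  have hp0 : 0 < p := by linarith
  have hq0 : 0 < q := by linarith
  have hm0 := m_ne_zero n k
  have hmt := m_ne_top n k
  have hvx0 := hv0 x
  have hvxt := hvt x
  set G := W (fun y => f y ^ p * v y) (B k x) with hG
  have h1 : W (fun y => f y * v y) (B k x) ≤ G ^ (1 / p) * W v (B k x) ^ (1 - 1 / p) := by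
    have := ENNReal.lintegral_mul_norm_pow_le (μ := volume.restrict (B k x))
      (f := fun y => f y ^ p * v y) (g := v) (by fun_prop) hv.aemeasurable (p := 1 / p) (q := 1 - 1 / p)
      (by positivity) (by rw [sub_nonneg, div_le_one hp0]; exact hp) (by ring)
    rw [hG, withDensity_apply _ (meas_B k x), withDensity_apply _ (meas_B k x), withDensity_apply _ (meas_B k x)]
    refine le_trans (le_of_eq ?_) this
    refine lintegral_congr fun y => ?_
    rw [ENNReal.mul_rpow_of_nonneg _ _ (by positivity), ← ENNReal.rpow_mul, mul_one_div_cancel hp0.ne',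
      ENNReal.rpow_one, mul_assoc, ← ENNReal.rpow_add _ _ (hv0 y) (hvt y)]
    simp
  have h2 : W (fun y => f y * v y) (B k x) ^ p ≤ G * (Cv * m n k * v x) ^ (p - 1) := by
    calc _ ≤ (G ^ (1 / p) * W v (B k x) ^ (1 - 1 / p)) ^ p := ENNReal.rpow_le_rpow h1 hp0.le
      _ = G * W v (B k x) ^ (p - 1) := by
          rw [ENNReal.mul_rpow_of_nonneg _ _ hp0.le, ← ENNReal.rpow_mul, ← ENNReal.rpow_mul,
            one_div_mul_cancel hp0.ne', ENNReal.rpow_one]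
          congr 2
          field_simp
      _ ≤ _ := by gcongr
  have hp1 : 0 ≤ p - 1 := by linarith
  rw [ENNReal.mul_rpow_of_nonneg _ _ hp0.le, ENNReal.mul_rpow_of_nonneg _ _ hp0.le]
  calc _ ≤ ((v x)⁻¹ ^ p * (m n k ^ (1 / p - 1 / q - 1)) ^ p) * (G * (Cv * m n k * v x) ^ (p - 1)) := by gcongr
    _ = Cv ^ (p - 1) * (((v x) ^ (-p) * (v x) ^ (p - 1)) * (m n k ^ ((1 / p - 1 / q - 1) * p) * m n k ^ (p - 1)) * G) := by
        rw [ENNReal.mul_rpow_of_nonneg _ _ hp1, ENNReal.mul_rpow_of_nonneg _ _ hp1, ← ENNReal.rpow_mul,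
          ENNReal.inv_rpow, ← ENNReal.rpow_neg]
        ring
    _ = _ := by
        rw [← ENNReal.rpow_add _ _ hvx0 hvxt, ← ENNReal.rpow_add _ _ hm0 hmt]
        have e1 : -p + (p - 1) = -1 := by ring
        have e2 : (1 / p - 1 / q - 1) * p + (p - 1) = -(p / q) := by field_simp; ring
        rw [e1, e2, ENNReal.rpow_neg_one]

/-- step 2 -/
lemma far_bound {n : ℕ} (s : ℝ) (hs : 0 < s) (u V g : (Fin n → ℝ) → ℝ≥0∞) (C : ℝ≥0∞) (hu : Wt u C)
    (hg : Measurable g) (k : ℤ) (x : Fin n → ℝ) :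
    (V x ^ s)⁻¹ * m n k ^ (-s) * W g (B k x) ≤
      C ^ s * (∫⁻ y, g y * u y ^ s) * (V x * W u (B k x)) ^ (-s) := by
  have hm0 := m_ne_zero n k
  have hmt := m_ne_top n k
  have hU0 := W_B_ne_zero hu.meas hu.ne0 k x
  have hUt := W_B_ne_top hu.Ct hu.a1 hu.net k x
  set U := W u (B k x)
  have hum := hu.meas
  have h1 : U ^ s * W g (B k x) ≤ (C * m n k) ^ s * ∫⁻ y, g y * u y ^ s := by
    rw [withDensity_apply _ (meas_B k x), ← lintegral_const_mul _ hg, ← lintegral_const_mul _ (by fun_prop)]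
    refine le_trans ?_ (setLIntegral_le_lintegral (B k x) _)
    refine setLIntegral_mono_ae (by fun_prop) ?_
    filter_upwards [hu.a1 x ((2:ℝ)^k) (by positivity)] with y hy hyB
    have := hy hyB
    calc U ^ s * g y ≤ (C * m n k * u y) ^ s * g y := by
          gcongr
          rw [← vol_B k x]; exact this
      _ = _ := by rw [ENNReal.mul_rpow_of_nonneg _ _ hs.le]; ring
  have hUs0 : U ^ s ≠ 0 := (ENNReal.rpow_pos (pos_iff_ne_zero.2 hU0) hUt).ne'
  have hUst : U ^ s ≠ ⊤ := ENNReal.rpow_ne_top_of_nonneg hs.le hUt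
  have hms0 : m n k ^ s ≠ 0 := (ENNReal.rpow_pos (pos_iff_ne_zero.2 hm0) hmt).ne'
  have hmst : m n k ^ s ≠ ⊤ := ENNReal.rpow_ne_top_of_nonneg hs.le hmt
  calc (V x ^ s)⁻¹ * m n k ^ (-s) * W g (B k x) 
      = (V x ^ s)⁻¹ * m n k ^ (-s) * (U ^ s)⁻¹ * (U ^ s * W g (B k x)) := by
        rw [mul_assoc _ (U ^ s)⁻¹, ← mul_assoc (U ^ s)⁻¹, ENNReal.inv_mul_cancel hUs0 hUst, one_mul]
    _ ≤ (V x ^ s)⁻¹ * m n k ^ (-s) * (U ^ s)⁻¹ * ((C * m n k) ^ s * ∫⁻ y, g y * u y ^ s) := by gcongr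
    _ = C ^ s * (∫⁻ y, g y * u y ^ s) * ((V x ^ s)⁻¹ * (U ^ s)⁻¹) * ((m n k ^ s)⁻¹ * m n k ^ s) := by
        rw [ENNReal.mul_rpow_of_nonneg _ _ hs.le, ENNReal.rpow_neg]; ring
    _ = _ := by
        rw [ENNReal.inv_mul_cancel hms0 hmst, mul_one, ENNReal.rpow_neg, ENNReal.mul_rpow_of_nonneg _ _ hs.le,
          ENNReal.mul_inv (Or.inr hUst) (Or.inr hUs0)]

/-- step 6 -/
lemma term_bound (w U mm uy ρ Cp C1 : ℝ≥0∞) (s γ : ℝ) (hs : 0 < s) (hγ : 0 < γ)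
    (hw0 : w ≠ 0) (hwt : w ≠ ⊤) (hm0 : mm ≠ 0) (hmt : mm ≠ ⊤)
    (hu0 : uy ≠ 0) (hut : uy ≠ ⊤) (hρ0 : ρ ≠ 0) (hρt : ρ ≠ ⊤) (hU : U ≤ Cp * mm * uy)
    (hA : w / mm * U ≤ C1 * ρ) :
    (U / mm) ^ s * (w / mm * U) ^ γ ≤ 
      Cp ^ (s + γ) * (uy ^ s * ρ ^ γ) * (if w ≤ ρ / uy then (w / (ρ / uy)) ^ γ else 0) +
      C1 ^ (s + γ) * (uy ^ s * ρ ^ γ) * (if ρ / uy ≤ w then ((ρ / uy) / w) ^ s else 0) := by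
  have hz : U / mm ≤ Cp * uy := by
    refine ENNReal.div_le_of_le_mul ?_
    refine hU.trans (le_of_eq (by ring))
  have hAz : w / mm * U = w * (U / mm) := by simp only [div_eq_mul_inv]; ring
  set σ := ρ / uy with hσ
  have hσ0 : σ ≠ 0 := ENNReal.div_ne_zero.2 ⟨hρ0, hut⟩
  have hσt : σ ≠ ⊤ := ENNReal.div_ne_top hρt hu0
  have hσu : σ * uy = ρ := ENNReal.div_mul_cancel hu0 hut
  rcases le_total w σ with h | h
  · rw [if_pos h]
    refine le_trans ?_ le_self_add
    calc (U / mm) ^ s * (w / mm * U) ^ γ ≤ (Cp * uy) ^ s * (w * (Cp * uy)) ^ γ := by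
          rw [hAz]; gcongr
      _ = (Cp * uy) ^ s * (Cp * (ρ * (w / σ))) ^ γ := by
          congr 2
          rw [← hσu]
          calc w * (Cp * uy) = w * (Cp * uy) * (σ * σ⁻¹) := by rw [ENNReal.mul_inv_cancel hσ0 hσt, mul_one]
            _ = _ := by rw [div_eq_mul_inv]; ring
      _ = _ := by
          rw [ENNReal.mul_rpow_of_nonneg _ _ hs.le, ENNReal.mul_rpow_of_nonneg _ _ hγ.le,
            ENNReal.mul_rpow_of_nonneg _ _ hγ.le, ENNReal.rpow_add_of_nonneg _ _ hs.le hγ.le]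
          ring
  · rw [if_pos h]
    refine le_trans ?_ le_add_self
    have h1 : U / mm ≤ C1 * (uy * (σ / w)) := by
      have : U / mm ≤ (C1 * ρ) / w := by
        rw [ENNReal.le_div_iff_mul_le (Or.inl hw0) (Or.inl hwt), mul_comm, ← hAz]; exact hA
      refine this.trans (le_of_eq ?_)
      rw [← hσu, div_eq_mul_inv, div_eq_mul_inv]; ring
    calc (U / mm) ^ s * (w / mm * U) ^ γ ≤ (C1 * (uy * (σ / w))) ^ s * (C1 * ρ) ^ γ := by gcongr
      _ = _ := by
          rw [ENNReal.mul_rpow_of_nonneg _ _ hs.le, ENNReal.mul_rpow_of_nonneg _ _ hs.le, ENNReal.mul_rpow_of_nonneg _ _ hγ.le,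
            ENNReal.rpow_add_of_nonneg _ _ hs.le hγ.le]
          ring

lemma sum_bound {n : ℕ} (hn : 0 < n) (s γ : ℝ) (hs : 0 < s) (hγ : 0 < γ) (u V : (Fin n → ℝ) → ℝ≥0∞) (C CV : ℝ≥0∞)
    (hu : Wt u C) (hV : Wt V CV) (C1 : ℝ≥0∞) (y : Fin n → ℝ)
    (hy : ∀ k, W u (B k y) ≤ C * 2 ^ n * m n k * u y) (ρ : ℝ≥0∞) (hρ0 : ρ ≠ 0) (hρt : ρ ≠ ⊤) :
    ∑' k : ℤ, (if W V (B k y) / m n k * W u (B k y) ≤ C1 * ρ then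
      (W u (B k y) / m n k) ^ s * (W V (B k y) / m n k * W u (B k y)) ^ γ else 0) ≤
    ((C * 2 ^ n) ^ (s + γ) * (1 - (1 - (2 * CV)⁻¹) ^ γ)⁻¹ + C1 ^ (s + γ) * (1 - (1 - (2 * CV)⁻¹) ^ s)⁻¹) *
      (u y ^ s * ρ ^ γ) := by
  have hgr := fun k => W_growth hn hV.meas hV.Ct hV.a1 hV.net k y
  have h0 := fun k => W_B_ne_zero hV.meas hV.ne0 k y
  have ht := fun k => W_B_ne_top hV.Ct hV.a1 hV.net k y
  have g1 := geo_sum_low (fun k => W V (B k y)) _ hgr (ρ / u y) γ hγ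
  have g2 := geo_sum_high (fun k => W V (B k y)) _ hgr (ρ / u y) s hs
  calc _ ≤ ∑' k : ℤ, ((C * 2 ^ n) ^ (s + γ) * (u y ^ s * ρ ^ γ) * (if W V (B k y) ≤ ρ / u y then (W V (B k y) / (ρ / u y)) ^ γ else 0) +
      C1 ^ (s + γ) * (u y ^ s * ρ ^ γ) * (if ρ / u y ≤ W V (B k y) then ((ρ / u y) / W V (B k y)) ^ s else 0)) := by
        refine ENNReal.tsum_le_tsum fun k => ?_
        split_ifs with hA
        all_goals first
          | exact zero_le
          | skip
        all_goals
          refine (term_bound (W V (B k y)) (W u (B k y)) (m n k) (u y) ρ (C * 2 ^ n) C1 s γ hs hγ (h0 k) (ht k)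
            (m_ne_zero n k) (m_ne_top n k) (hu.ne0 y) (hu.net y) hρ0 hρt (hy k) hA).trans (le_of_eq ?_)
          simp only [*, if_true, if_false]
    _ = (C * 2 ^ n) ^ (s + γ) * (u y ^ s * ρ ^ γ) * ∑' k : ℤ, (if W V (B k y) ≤ ρ / u y then (W V (B k y) / (ρ / u y)) ^ γ else 0) +
      C1 ^ (s + γ) * (u y ^ s * ρ ^ γ) * ∑' k : ℤ, (if ρ / u y ≤ W V (B k y) then ((ρ / u y) / W V (B k y)) ^ s else 0) := by
        rw [ENNReal.tsum_add, ENNReal.tsum_mul_left, ENNReal.tsum_mul_left]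
    _ ≤ (C * 2 ^ n) ^ (s + γ) * (u y ^ s * ρ ^ γ) * (1 - (1 - (2 * CV)⁻¹) ^ γ)⁻¹ +
      C1 ^ (s + γ) * (u y ^ s * ρ ^ γ) * (1 - (1 - (2 * CV)⁻¹) ^ s)⁻¹ := by gcongr
    _ = _ := by ring

end BCP

namespace BCP

/-- step 5 -/
lemma h_bound {n : ℕ} (s γ : ℝ) (hs : 0 < s) (hγ : 0 < γ) (hsγ : s + γ < 1)
    (u V : (Fin n → ℝ) → ℝ≥0∞) (C CV K : ℝ≥0∞)
    (hu : Wt u C) (hV : Wt V CV) (k : ℤ) (y : Fin n → ℝ)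
    (hK : ∫⁻ x in B k y, u x * V x ^ γ ≤ K * W u (B k y) * (W V (B k y) / m n k) ^ γ) (ρ : ℝ≥0∞) :
    m n k ^ (-s) * W (fun x => if V x * W u (B k x) < ρ then
      u x * V x ^ (1 - s) * (V x * W u (B k x)) ^ (-(1 - s - γ)) else 0) (B k y) ≤
    (C * 2 ^ n) ^ (1 - s - γ) * K * (if W V (B k y) / m n k * W u (B k y) ≤ (CV * (C * 2 ^ n)) * ρ then
      (W u (B k y) / m n k) ^ s * (W V (B k y) / m n k * W u (B k y)) ^ γ else 0) := by
  have hum := hu.meas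
  have hVm := hV.meas
  have hm0 := m_ne_zero n k
  have hmt := m_ne_top n k
  have hU0 := W_B_ne_zero hu.meas hu.ne0 k y
  have hUt := W_B_ne_top hu.Ct hu.a1 hu.net k y
  have he : 0 < 1 - s - γ := by linarith
  set e := 1 - s - γ with hedef
  set U := W u (B k y) with hU
  set Z := W V (B k y) / m n k with hZ
  set Cd := C * 2 ^ n with hCd
  rw [withDensity_apply _ (meas_B k y)]
  have key : ∀ᵐ x, x ∈ B k y → (if V x * W u (B k x) < ρ then
      u x * V x ^ (1 - s) * (V x * W u (B k x)) ^ (-e) else 0) ≤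
      (if Z * U ≤ (CV * Cd) * ρ then Cd ^ e * U ^ (-e) else 0) * (u x * V x ^ γ) := by
    filter_upwards [hV.a1 y ((2:ℝ)^k) (by positivity)] with x hx hxB
    have hA := hx hxB
    have hZx : Z ≤ CV * V x := by
      rw [hZ]
      refine ENNReal.div_le_of_le_mul ?_
      rw [← vol_B k y]
      exact hA.trans (le_of_eq (by simp only [B]; ring))
    have hdx : U ≤ Cd * W u (B k x) := W_doubling hu.meas hu.a1 k x y ((mem_B_comm k x y).2 hxB)
    have hx0 := W_B_ne_zero hu.meas hu.ne0 k x
    have hxt := W_B_ne_top hu.Ct hu.a1 hu.net k x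
    split_ifs with h1 h2 h2
    · have h3 : (W u (B k x)) ^ (-e) ≤ Cd ^ e * U ^ (-e) := by
        have := inv_le_of_le_mul hU0 hUt hdx
        calc (W u (B k x)) ^ (-e) = ((W u (B k x))⁻¹) ^ e := by rw [ENNReal.rpow_neg, ENNReal.inv_rpow]
          _ ≤ (Cd * U⁻¹) ^ e := by gcongr
          _ = _ := by rw [ENNReal.mul_rpow_of_nonneg _ _ he.le, ENNReal.inv_rpow, ENNReal.rpow_neg]
      calc u x * V x ^ (1 - s) * (V x * W u (B k x)) ^ (-e) 
          = u x * (V x ^ (1 - s) * V x ^ (-e)) * (W u (B k x)) ^ (-e) := by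
            rw [ENNReal.mul_rpow_of_ne_zero (hV.ne0 x) hx0]; ring
        _ = u x * V x ^ γ * (W u (B k x)) ^ (-e) := by
            rw [← ENNReal.rpow_add _ _ (hV.ne0 x) (hV.net x)]
            congr 3
            rw [hedef]; ring
        _ ≤ u x * V x ^ γ * (Cd ^ e * U ^ (-e)) := by gcongr
        _ = _ := by ring
    · exfalso
      apply h2
      calc Z * U ≤ (CV * V x) * (Cd * W u (B k x)) := by gcongr
        _ = CV * Cd * (V x * W u (B k x)) := by ring
        _ ≤ _ := by gcongr
    · exact zero_le
    · exact zero_le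
  calc m n k ^ (-s) * _ ≤ m n k ^ (-s) * ∫⁻ x in B k y, (if Z * U ≤ (CV * Cd) * ρ then Cd ^ e * U ^ (-e) else 0) * (u x * V x ^ γ) := by
        exact mul_le_mul' le_rfl (setLIntegral_mono_ae (by fun_prop) key)
    _ = m n k ^ (-s) * ((if Z * U ≤ (CV * Cd) * ρ then Cd ^ e * U ^ (-e) else 0) * ∫⁻ x in B k y, (u x * V x ^ γ)) := by
        rw [lintegral_const_mul _ (by fun_prop)]
    _ ≤ m n k ^ (-s) * ((if Z * U ≤ (CV * Cd) * ρ then Cd ^ e * U ^ (-e) else 0) * (K * U * Z ^ γ)) := by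
        gcongr
    _ = _ := by
        split_ifs with h
        · have : (U / m n k) ^ s * (Z * U) ^ γ = m n k ^ (-s) * (U ^ (-e) * U) * Z ^ γ := by
            rw [div_eq_mul_inv, ENNReal.mul_rpow_of_nonneg _ _ hs.le, ENNReal.mul_rpow_of_nonneg _ _ hγ.le,
              ENNReal.inv_rpow, ← ENNReal.rpow_neg]
            have : U ^ (-e) * U = U ^ s * U ^ γ := by
              conv_lhs => rw [← ENNReal.rpow_one U, ← ENNReal.rpow_mul, ← ENNReal.rpow_add _ _ hU0 hUt]
              rw [← ENNReal.rpow_add _ _ hU0 hUt]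
              congr 1
              rw [hedef]; ring
            rw [this]; ring
          rw [this]; ring
        · simp

/-- step 3 -/
lemma sum_a (g a : ℤ → ℝ≥0∞) (θ : ℝ≥0∞) (hg : ∀ k, g k ≤ θ * g (k + 1))
    (ρ lam M : ℝ≥0∞) (q ε : ℝ) (hq : 0 < q) (hε : 0 < ε) (hρ0 : ρ ≠ 0) (hρt : ρ ≠ ⊤)
    (h1 : ∀ k, a k ≤ M * g k ^ (-q)) (h2 : ∀ k, g k < ρ → a k ≤ lam * (g k / ρ) ^ ε) :
    ∑' k, a k ≤ M * ρ ^ (-q) * (1 - θ ^ q)⁻¹ + lam * (1 - θ ^ ε)⁻¹ := by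
  have g1 := geo_sum_low g θ hg ρ ε hε
  have g2 := geo_sum_high g θ hg ρ q hq
  calc ∑' k, a k ≤ ∑' k, (M * ρ ^ (-q) * (if ρ ≤ g k then (ρ / g k) ^ q else 0) + 
        lam * (if g k ≤ ρ then (g k / ρ) ^ ε else 0)) := by
        refine ENNReal.tsum_le_tsum fun k => ?_
        rcases lt_or_ge (g k) ρ with h | h
        · refine le_trans ?_ le_add_self
          rw [if_pos h.le]; exact h2 k h
        · refine le_trans ?_ le_self_add
          rw [if_pos h]
          refine (h1 k).trans (le_of_eq ?_)
          rw [div_eq_mul_inv, ENNReal.mul_rpow_of_nonneg _ _ hq.le, ENNReal.inv_rpow, ← ENNReal.rpow_neg]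
          have : ρ ^ (-q) * ρ ^ q = 1 := by rw [← ENNReal.rpow_add _ _ hρ0 hρt]; simp
          calc M * g k ^ (-q) = M * g k ^ (-q) * (ρ ^ (-q) * ρ ^ q) := by rw [this, mul_one]
            _ = _ := by ring
    _ = M * ρ ^ (-q) * ∑' k, (if ρ ≤ g k then (ρ / g k) ^ q else 0) + 
        lam * ∑' k, (if g k ≤ ρ then (g k / ρ) ^ ε else 0) := by
        rw [ENNReal.tsum_add, ENNReal.tsum_mul_left, ENNReal.tsum_mul_left]
    _ ≤ _ := by gcongr

end BCP

namespace BCP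

def aa {n : ℕ} (p q : ℝ) (f v : (Fin n → ℝ) → ℝ≥0∞) (k : ℤ) (x : Fin n → ℝ) : ℝ≥0∞ :=
  (v x)⁻¹ * m n k ^ (1 / p - 1 / q - 1) * W (fun y => f y * v y) (B k x)

lemma meas_aa {n : ℕ} (p q : ℝ) (f v : (Fin n → ℝ) → ℝ≥0∞) (hv : Measurable v) (k : ℤ) :
    Measurable (aa p q f v k) := by
  unfold aa
  have := meas_WB (fun y => f y * v y) k
  fun_prop

def hh {n : ℕ} (s γ : ℝ) (u V : (Fin n → ℝ) → ℝ≥0∞) (ρ : ℝ≥0∞) (k : ℤ) (x : Fin n → ℝ) : ℝ≥0∞ :=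
  if V x * W u (B k x) < ρ then
      u x * V x ^ (1 - s) * (V x * W u (B k x)) ^ (-(1 - s - γ)) else 0

lemma meas_hh {n : ℕ} (s γ : ℝ) (u V : (Fin n → ℝ) → ℝ≥0∞) (hu : Measurable u) (hV : Measurable V)
    (ρ : ℝ≥0∞) (k : ℤ) : Measurable (hh s γ u V ρ k) := by
  unfold hh
  have := meas_WB u k
  refine Measurable.ite (measurableSet_lt (by fun_prop) (by fun_prop)) (by fun_prop) (by fun_prop)

def ZZ {n : ℕ} (p q ε : ℝ) (f u V v : (Fin n → ℝ) → ℝ≥0∞) (ρ lam : ℝ≥0∞) (k : ℤ) : Set (Fin n → ℝ) :=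
  {x | V x * W u (B k x) < ρ ∧ lam * ((V x * W u (B k x)) / ρ) ^ ε < aa p q f v k x}

lemma meas_ZZ {n : ℕ} (p q ε : ℝ) (f u V v : (Fin n → ℝ) → ℝ≥0∞) (hv : Measurable v) 
    (hV : Measurable V) (ρ lam : ℝ≥0∞) (k : ℤ) : MeasurableSet (ZZ p q ε f u V v ρ lam k) := by
  have := meas_WB u k
  have := meas_aa p q f v hv k
  unfold ZZ
  rw [Set.ofPred_and]
  refine MeasurableSet.inter ?_ ?_
  · exact measurableSet_lt (by fun_prop) (by fun_prop)
  · exact measurableSet_lt (by fun_prop) (by fun_prop)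

lemma Z_bound {n : ℕ} (p q γ : ℝ) (hp : 1 ≤ p) (hpq : p < q) 
    (f u V : (Fin n → ℝ) → ℝ≥0∞) (C CV Cv : ℝ≥0∞) (hf : Measurable f)
    (hu : Wt u C) (hV : Wt V CV)
    (hx : ∀ᵐ x, ∀ k, W (fun x => V x ^ (p / q)) (B k x) ≤ Cv * m n k * V x ^ (p / q))
    (ρ lam : ℝ≥0∞) (hρ0 : ρ ≠ 0) (hρt : ρ ≠ ⊤) (hl0 : lam ≠ 0) (hlt : lam ≠ ⊤) (k : ℤ) :
    W (fun x => u x * V x) (ZZ p q ((1 - p / q - γ) / p) f u V (fun x => V x ^ (p / q)) ρ lam k) ≤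
    Cv ^ (p - 1) * lam ^ (-p) * ρ ^ (1 - p / q - γ) * 
      ∫⁻ y, f y ^ p * V y ^ (p / q) * (m n k ^ (-(p / q)) * W (hh (p / q) γ u V ρ k) (B k y)) := by
  have hp0 : 0 < p := by linarith
  have hq0 : 0 < q := by linarith
  have hum := hu.meas
  have hVm := hV.meas
  set s := p / q with hs
  set e := 1 - s - γ with he
  have hWg := meas_WB (fun y => f y ^ p * V y ^ s) k
  have hhm := meas_hh s γ u V hum hVm ρ k
  have hWh := meas_WB (hh s γ u V ρ k) k
  rw [withDensity_apply _ (meas_ZZ _ _ _ _ _ _ _ (by fun_prop) hVm _ _ _)]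
  have hfub := fubini_B (fun y => f y ^ p * V y ^ s) (hh s γ u V ρ k) (by fun_prop) hhm k
  have : ∫⁻ y, f y ^ p * V y ^ s * (m n k ^ (-s) * W (hh s γ u V ρ k) (B k y)) = 
      ∫⁻ x, m n k ^ (-s) * (hh s γ u V ρ k x * W (fun y => f y ^ p * V y ^ s) (B k x)) := by
    rw [lintegral_const_mul _ (by fun_prop), hfub, ← lintegral_const_mul _ (by fun_prop)]
    refine lintegral_congr fun y => by ring
  rw [this, ← lintegral_const_mul _ (by fun_prop)]
  refine le_trans ?_ (setLIntegral_le_lintegral (ZZ p q (e / p) f u V (fun x => V x ^ s) ρ lam k) _)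
  refine setLIntegral_mono_ae (by fun_prop) ?_
  filter_upwards [hx] with x hx hxZ
  obtain ⟨h1, h2⟩ := hxZ
  have hb := a_bound p q hp hpq f (fun x => V x ^ s) hf (by fun_prop)
    (fun x => (ENNReal.rpow_pos (pos_iff_ne_zero.2 (hV.ne0 x)) (hV.net x)).ne') 
    (fun x => ENNReal.rpow_ne_top_of_ne_zero (hV.ne0 x) (hV.net x)) Cv k x (hx k)
  simp only [← hs] at hb
  have hU0 := W_B_ne_zero hu.meas hu.ne0 k x
  have hUt := W_B_ne_top hu.Ct hu.a1 hu.net k x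
  set D := V x * W u (B k x) with hD
  have hD0 : D ≠ 0 := mul_ne_zero (hV.ne0 x) hU0
  have hDt : D ≠ ⊤ := ENNReal.mul_ne_top (hV.net x) hUt
  have hr0 : D / ρ ≠ 0 := ENNReal.div_ne_zero.2 ⟨hD0, hρt⟩
  have hrt : D / ρ ≠ ⊤ := ENNReal.div_ne_top hDt hρ0
  have h3 : lam ^ p * (D / ρ) ^ e ≤ aa p q f (fun x => V x ^ s) k x ^ p := by
    have := ENNReal.rpow_le_rpow h2.le hp0.le
    rwa [ENNReal.mul_rpow_of_nonneg _ _ hp0.le, ← ENNReal.rpow_mul, div_mul_cancel₀ _ hp0.ne'] at this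
  have h4 : (1 : ℝ≥0∞) ≤ lam ^ (-p) * (ρ ^ e * D ^ (-e)) * aa p q f (fun x => V x ^ s) k x ^ p := by
    have e1 : lam ^ (-p) * lam ^ p = 1 := by rw [← ENNReal.rpow_add _ _ hl0 hlt]; simp
    have e2 : ρ ^ e * D ^ (-e) = (D / ρ) ^ (-e) := by
      rw [div_eq_mul_inv, ENNReal.mul_rpow_of_ne_zero hD0 (ENNReal.inv_ne_zero.2 hρt), ENNReal.inv_rpow, ← ENNReal.rpow_neg,
        neg_neg, mul_comm]
    have e3 : (D / ρ) ^ (-e) * (D / ρ) ^ e = 1 := by rw [← ENNReal.rpow_add _ _ hr0 hrt]; simp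
    calc (1 : ℝ≥0∞) = (lam ^ (-p) * lam ^ p) * ((D / ρ) ^ (-e) * (D / ρ) ^ e) := by rw [e1, e3, mul_one]
      _ = lam ^ (-p) * (D / ρ) ^ (-e) * (lam ^ p * (D / ρ) ^ e) := by ring
      _ ≤ lam ^ (-p) * (D / ρ) ^ (-e) * aa p q f (fun x => V x ^ s) k x ^ p := by gcongr
      _ = _ := by rw [e2]
  have h5 : hh s γ u V ρ k x = u x * V x ^ (1 - s) * D ^ (-e) := by
    unfold hh; rw [if_pos h1]
  have h6 : V x ^ (1 - s) = V x * (V x ^ s)⁻¹ := by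
    rw [ENNReal.rpow_sub _ _ (hV.ne0 x) (hV.net x), ENNReal.rpow_one, div_eq_mul_inv]
  calc u x * V x = u x * V x * 1 := by rw [mul_one]
    _ ≤ u x * V x * (lam ^ (-p) * (ρ ^ e * D ^ (-e)) * aa p q f (fun x => V x ^ s) k x ^ p) := by gcongr
    _ ≤ u x * V x * (lam ^ (-p) * (ρ ^ e * D ^ (-e)) * (Cv ^ (p - 1) * ((V x ^ s)⁻¹ * m n k ^ (-s) * W (fun y => f y ^ p * V y ^ s) (B k x)))) := by
        unfold aa; gcongr
    _ = _ := by rw [h5, h6]; ring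

lemma Z_union {n : ℕ} (hn : 0 < n) (p q γ : ℝ) (hp : 1 ≤ p) (hpq : p < q) (hγ : 0 < γ) (hγ1 : p / q + γ < 1)
    (f u V : (Fin n → ℝ) → ℝ≥0∞) (C CV Cv K : ℝ≥0∞) (hf : Measurable f)
    (hu : Wt u C) (hV : Wt V CV)
    (hx : ∀ᵐ x, ∀ k, W (fun x => V x ^ (p / q)) (B k x) ≤ Cv * m n k * V x ^ (p / q))
    (hK : ∀ k y, ∫⁻ x in B k y, u x * V x ^ γ ≤ K * W u (B k y) * (W V (B k y) / m n k) ^ γ)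
    (ρ lam : ℝ≥0∞) (hρ0 : ρ ≠ 0) (hρt : ρ ≠ ⊤) (hl0 : lam ≠ 0) (hlt : lam ≠ ⊤) :
    W (fun x => u x * V x) (⋃ k, ZZ p q ((1 - p / q - γ) / p) f u V (fun x => V x ^ (p / q)) ρ lam k) ≤
    Cv ^ (p - 1) * ((C * 2 ^ n) ^ (1 - p / q - γ) * K * ((C * 2 ^ n) ^ (p / q + γ) * (1 - (1 - (2 * CV)⁻¹) ^ γ)⁻¹ + (CV * (C * 2 ^ n)) ^ (p / q + γ) * (1 - (1 - (2 * CV)⁻¹) ^ (p / q))⁻¹)) * 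
      lam ^ (-p) * ρ ^ (1 - p / q) * ∫⁻ y, f y ^ p * V y ^ (p / q) * u y ^ (p / q) := by
  have hp0 : 0 < p := by linarith
  have hq0 : 0 < q := by linarith
  have hum := hu.meas
  have hVm := hV.meas
  have hs0 : 0 < p / q := by positivity
  set s := p / q with hs
  set K3 := (C * 2 ^ n) ^ (s + γ) * (1 - (1 - (2 * CV)⁻¹) ^ γ)⁻¹ + (CV * (C * 2 ^ n)) ^ (s + γ) * (1 - (1 - (2 * CV)⁻¹) ^ s)⁻¹
  have hWh := fun k => meas_WB (hh s γ u V ρ k) k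
  calc _ ≤ ∑' k, W (fun x => u x * V x) (ZZ p q ((1 - s - γ) / p) f u V (fun x => V x ^ s) ρ lam k) := measure_iUnion_le _
    _ ≤ ∑' k, Cv ^ (p - 1) * lam ^ (-p) * ρ ^ (1 - s - γ) * 
      ∫⁻ y, f y ^ p * V y ^ s * (m n k ^ (-s) * W (hh s γ u V ρ k) (B k y)) :=
        ENNReal.tsum_le_tsum fun k => Z_bound p q γ hp hpq f u V C CV Cv hf hu hV hx ρ lam hρ0 hρt hl0 hlt k
    _ = Cv ^ (p - 1) * lam ^ (-p) * ρ ^ (1 - s - γ) * 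
      ∫⁻ y, ∑' k, f y ^ p * V y ^ s * (m n k ^ (-s) * W (hh s γ u V ρ k) (B k y)) := by
        rw [ENNReal.tsum_mul_left, lintegral_tsum]
        intro k
        have := hWh k
        fun_prop
    _ ≤ Cv ^ (p - 1) * lam ^ (-p) * ρ ^ (1 - s - γ) * 
      ∫⁻ y, ((C * 2 ^ n) ^ (1 - s - γ) * K * K3 * ρ ^ γ) * (f y ^ p * V y ^ s * u y ^ s) := by
        refine mul_le_mul' le_rfl (lintegral_mono_ae ?_)
        filter_upwards [W_pointwise hu.a1] with y hy
        have hb := sum_bound hn s γ hs0 hγ u V C CV hu hV (CV * (C * 2 ^ n)) y hy ρ hρ0 hρt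
        rw [ENNReal.tsum_mul_left]
        calc f y ^ p * V y ^ s * ∑' k, (m n k ^ (-s) * W (hh s γ u V ρ k) (B k y)) 
            ≤ f y ^ p * V y ^ s * ∑' k, (C * 2 ^ n) ^ (1 - s - γ) * K * (if W V (B k y) / m n k * W u (B k y) ≤ (CV * (C * 2 ^ n)) * ρ then
      (W u (B k y) / m n k) ^ s * (W V (B k y) / m n k * W u (B k y)) ^ γ else 0) :=
              mul_le_mul' le_rfl (ENNReal.tsum_le_tsum fun k => h_bound s γ hs0 hγ hγ1 u V C CV K hu hV k y (hK k y) ρ)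
          _ ≤ f y ^ p * V y ^ s * ((C * 2 ^ n) ^ (1 - s - γ) * K * (K3 * (u y ^ s * ρ ^ γ))) := by
              rw [ENNReal.tsum_mul_left]
              exact mul_le_mul' le_rfl (mul_le_mul' le_rfl hb)
          _ = _ := by ring
    _ = _ := by
        rw [lintegral_const_mul _ (by fun_prop)]
        have : ρ ^ (1 - s) = ρ ^ (1 - s - γ) * ρ ^ γ := by
          rw [← ENNReal.rpow_add _ _ hρ0 hρt]; congr 1; ring
        rw [this]; ring

end BCP

namespace BCP

lemma S_ne {θ : ℝ≥0∞} (hθ : θ < 1) {s : ℝ} (hs : 0 < s) : (1 - θ ^ s)⁻¹ ≠ ⊤ ∧ (1 - θ ^ s)⁻¹ ≠ 0 := by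
  constructor
  · rw [ENNReal.inv_ne_top]
    exact (tsub_pos_of_lt (ENNReal.rpow_lt_one hθ hs)).ne'
  · rw [ENNReal.inv_ne_zero]
    exact ne_top_of_le_ne_top ENNReal.one_ne_top tsub_le_self

lemma a_far {n : ℕ} (p q : ℝ) (hp : 1 ≤ p) (hpq : p < q) 
    (f u V : (Fin n → ℝ) → ℝ≥0∞) (C CV Cv : ℝ≥0∞) (hf : Measurable f)
    (hu : Wt u C) (hV : Wt V CV) (x : Fin n → ℝ) (k : ℤ)
    (hx : W (fun x => V x ^ (p / q)) (B k x) ≤ Cv * m n k * V x ^ (p / q)) :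
    aa p q f (fun x => V x ^ (p / q)) k x ≤ 
      ((Cv ^ (p - 1) * C ^ (p / q) + 1) * ∫⁻ y, f y ^ p * V y ^ (p / q) * u y ^ (p / q)) ^ (1 / p) * 
        (V x * W u (B k x)) ^ (-(1 / q)) := by
  have hp0 : 0 < p := by linarith
  have hq0 : 0 < q := by linarith
  have hum := hu.meas
  have hVm := hV.meas
  have hs0 : 0 < p / q := by positivity
  set s := p / q with hs
  have hb := a_bound p q hp hpq f (fun x => V x ^ s) hf (by fun_prop)
    (fun x => (ENNReal.rpow_pos (pos_iff_ne_zero.2 (hV.ne0 x)) (hV.net x)).ne') 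
    (fun x => ENNReal.rpow_ne_top_of_ne_zero (hV.ne0 x) (hV.net x)) Cv k x hx
  simp only [← hs] at hb
  have hfar := far_bound s hs0 u V (fun y => f y ^ p * V y ^ s) C hu (by fun_prop) k x
  set N := ∫⁻ y, f y ^ p * V y ^ s * u y ^ s
  set D := V x * W u (B k x)
  have h1 : aa p q f (fun x => V x ^ s) k x ^ p ≤ (Cv ^ (p - 1) * C ^ s + 1) * N * D ^ (-s) := by
    unfold aa
    calc _ ≤ _ := hb
      _ ≤ Cv ^ (p - 1) * (C ^ s * N * D ^ (-s)) := by gcongr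
      _ = (Cv ^ (p - 1) * C ^ s) * N * D ^ (-s) := by ring
      _ ≤ _ := by gcongr; exact le_self_add
  calc aa p q f (fun x => V x ^ s) k x = (aa p q f (fun x => V x ^ s) k x ^ p) ^ (1 / p) := by
        rw [← ENNReal.rpow_mul, mul_one_div_cancel hp0.ne', ENNReal.rpow_one]
    _ ≤ ((Cv ^ (p - 1) * C ^ s + 1) * N * D ^ (-s)) ^ (1 / p) := by gcongr
    _ = _ := by
        rw [ENNReal.mul_rpow_of_nonneg _ _ (by positivity), ← ENNReal.rpow_mul]
        congr 2
        rw [hs]; field_simp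

theorem core {n : ℕ} (hn : 0 < n) (p q : ℝ) (hp : 1 ≤ p) (hpq : p < q)
    (u V : (Fin n → ℝ) → ℝ≥0∞) (C CV : ℝ≥0∞) (hu : Wt u C) (hV : Wt V CV) :
    ∃ K : ℝ≥0∞, K ≠ ⊤ ∧ ∀ f : (Fin n → ℝ) → ℝ≥0∞, Measurable f → ∀ τ : ℝ≥0∞, τ ≠ 0 → τ ≠ ⊤ →
      (∫⁻ y, f y ^ p * V y ^ (p / q) * u y ^ (p / q)) ≠ 0 → (∫⁻ y, f y ^ p * V y ^ (p / q) * u y ^ (p / q)) ≠ ⊤ →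
      W (fun x => u x * V x) {x | τ < ∑' k, aa p q f (fun x => V x ^ (p / q)) k x} ≤
        K * τ ^ (-q) * (∫⁻ y, f y ^ p * V y ^ (p / q) * u y ^ (p / q)) ^ (q / p) := by
  have hp0 : 0 < p := by linarith
  have hq0 : 0 < q := by linarith
  have hum := hu.meas
  have hVm := hV.meas
  have hs0 : 0 < p / q := by positivity
  have hs1 : p / q < 1 := (div_lt_one hq0).2 hpq
  obtain ⟨γ, hγ, hγ1, K, hKt, hK⟩ := RH_B hn hum hu.Ct hu.a1 hu.net (1 - p / q) (by linarith)
  have hK' := fun k y => hK V hVm hV.net k y (W_B_ne_zero hV.meas hV.ne0 k y) (W_B_ne_top hV.Ct hV.a1 hV.net k y)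
  have hpt := W_pointwise (A1s_rpow hVm hV.a1 (p / q) hs0.le hs1.le)
  set Cv := CV ^ (p / q) * 2 ^ n with hCv
  have hCvt : Cv ≠ ⊤ := ENNReal.mul_ne_top (ENNReal.rpow_ne_top_of_nonneg hs0.le hV.Ct) (by simp)
  have hCdt : C * 2 ^ n ≠ ⊤ := ENNReal.mul_ne_top hu.Ct (by simp)
  set KK := Cv ^ (p - 1) * ((C * 2 ^ n) ^ (1 - p / q - γ) * K * ((C * 2 ^ n) ^ (p / q + γ) * (1 - (1 - (2 * CV)⁻¹) ^ γ)⁻¹ + (CV * (C * 2 ^ n)) ^ (p / q + γ) * (1 - (1 - (2 * CV)⁻¹) ^ (p / q))⁻¹)) with hKK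
  have hθV := theta_lt hV.Ct
  have hθ := theta_lt hu.Ct
  have hKKt : KK ≠ ⊤ := by
    refine ENNReal.mul_ne_top (ENNReal.rpow_ne_top_of_nonneg (by linarith) hCvt) (ENNReal.mul_ne_top (ENNReal.mul_ne_top 
      (ENNReal.rpow_ne_top_of_nonneg (by linarith) hCdt) hKt) (ENNReal.add_ne_top.2 ⟨ENNReal.mul_ne_top 
        (ENNReal.rpow_ne_top_of_nonneg (by linarith) hCdt) (S_ne hθV hγ).1, ENNReal.mul_ne_top 
        (ENNReal.rpow_ne_top_of_nonneg (by linarith) (ENNReal.mul_ne_top hV.Ct hCdt)) (S_ne hθV hs0).1⟩))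
  set ε := (1 - p / q - γ) / p with hε
  have hε0 : 0 < ε := div_pos (by linarith) hp0
  obtain ⟨hS1t, hS10⟩ := S_ne hθ (show 0 < 1 / q by positivity)
  obtain ⟨hS2t, hS20⟩ := S_ne hθ hε0
  set θ := 1 - (2 * C)⁻¹ with hθd
  set S1 := (1 - θ ^ (1 / q))⁻¹ with hS1
  set S2 := (1 - θ ^ ε)⁻¹ with hS2
  set K1 := Cv ^ (p - 1) * C ^ (p / q) + 1 with hK1
  have hK10 : K1 ≠ 0 := by rw [hK1]; simp
  have hK1t : K1 ≠ ⊤ := ENNReal.add_ne_top.2 ⟨ENNReal.mul_ne_top (ENNReal.rpow_ne_top_of_nonneg (by linarith) hCvt)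
    (ENNReal.rpow_ne_top_of_nonneg hs0.le hu.Ct), ENNReal.one_ne_top⟩
  set c := (2 * S2)⁻¹ with hc
  have hc0 : c ≠ 0 := ENNReal.inv_ne_zero.2 (ENNReal.mul_ne_top (by simp) hS2t)
  have hct : c ≠ ⊤ := ENNReal.inv_ne_top.2 (mul_ne_zero (by simp) hS20)
  have rp0 : ∀ {a : ℝ≥0∞} (r : ℝ), a ≠ 0 → a ≠ ⊤ → a ^ r ≠ 0 := fun r h1 h2 => (ENNReal.rpow_pos (pos_iff_ne_zero.2 h1) h2).ne'
  have rpt : ∀ {a : ℝ≥0∞} (r : ℝ), a ≠ 0 → a ≠ ⊤ → a ^ r ≠ ⊤ := fun r h1 h2 => ENNReal.rpow_ne_top_of_ne_zero h1 h2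
  set L := 2 * S1 * K1 ^ (1 / p) with hL
  have hL0 : L ≠ 0 := mul_ne_zero (mul_ne_zero (by simp) hS10) (rp0 _ hK10 hK1t)
  have hLt : L ≠ ⊤ := ENNReal.mul_ne_top (ENNReal.mul_ne_top (by simp) hS1t) (rpt _ hK10 hK1t)
  refine ⟨KK * c ^ (-p) * L ^ (q - p), ENNReal.mul_ne_top (ENNReal.mul_ne_top hKKt (rpt _ hc0 hct)) (rpt _ hL0 hLt), 
    fun f hf τ hτ0 hτt hN0 hNt => ?_⟩
  have hfar := fun x k (hx : ∀ k, W (fun x => V x ^ (p / q)) (B k x) ≤ Cv * m n k * V x ^ (p / q)) => 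
    a_far p q hp hpq f u V C CV Cv hf hu hV x k (hx k)
  have hun := fun ρ lam => Z_union hn p q γ hp hpq hγ (by linarith) f u V C CV Cv K hf hu hV hpt hK' ρ lam
  simp only [← hKK, ← hε, ← hK1] at hun hfar
  set N := ∫⁻ y, f y ^ p * V y ^ (p / q) * u y ^ (p / q) with hN
  set R := L * N ^ (1 / p) * τ⁻¹ with hR
  have hR0 : R ≠ 0 := mul_ne_zero (mul_ne_zero hL0 (rp0 _ hN0 hNt)) (ENNReal.inv_ne_zero.2 hτt)
  have hRt : R ≠ ⊤ := ENNReal.mul_ne_top (ENNReal.mul_ne_top hLt (rpt _ hN0 hNt)) (ENNReal.inv_ne_top.2 hτ0)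
  set ρ := R ^ q with hρ
  have hρ0 : ρ ≠ 0 := rp0 _ hR0 hRt
  have hρt : ρ ≠ ⊤ := rpt _ hR0 hRt
  have hl0 : c * τ ≠ 0 := mul_ne_zero hc0 hτ0
  have hlt : c * τ ≠ ⊤ := ENNReal.mul_ne_top hct hτt
  have hsub : {x | τ < ∑' k, aa p q f (fun x => V x ^ (p / q)) k x} ≤ᵐ[W (fun x => u x * V x)] 
      ⋃ k, ZZ p q ε f u V (fun x => V x ^ (p / q)) ρ (c * τ) k := by
    have hpt' := (withDensity_absolutelyContinuous (volume : Measure (Fin n → ℝ)) (fun x => u x * V x)).ae_le hpt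
    filter_upwards [hpt'] with x hx hxτ
    by_contra hnot
    have hnot' : ∀ k, ¬ (V x * W u (B k x) < ρ ∧ c * τ * ((V x * W u (B k x)) / ρ) ^ ε < aa p q f (fun x => V x ^ (p / q)) k x) := by
      intro k hk
      exact hnot (mem_iUnion.2 ⟨k, hk⟩)
    have hs := sum_a (fun k => V x * W u (B k x)) (fun k => aa p q f (fun x => V x ^ (p / q)) k x) θ
      (fun k => by
        calc V x * W u (B k x) ≤ V x * (θ * W u (B (k + 1) x)) := by
              gcongr; exact W_growth hn hum hu.Ct hu.a1 hu.net k x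
          _ = _ := by ring) ρ (c * τ) ((K1 * N) ^ (1 / p)) (1 / q) ε (by positivity) hε0 hρ0 hρt
      (fun k => hfar x k hx) (fun k hk => by
        by_contra hcon
        exact hnot' k ⟨hk, not_le.1 hcon⟩)
    have : (K1 * N) ^ (1 / p) * ρ ^ (-(1 / q)) * S1 + c * τ * S2 ≤ τ := by
      have e1 : c * τ * S2 = τ / 2 := by
        rw [hc, ENNReal.mul_inv (by simp) (by simp), div_eq_mul_inv]
        calc 2⁻¹ * S2⁻¹ * τ * S2 = τ * 2⁻¹ * (S2⁻¹ * S2) := by ring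
          _ = _ := by rw [ENNReal.inv_mul_cancel hS20 hS2t, mul_one]
      have e2 : ρ ^ (-(1 / q)) = R⁻¹ := by
        rw [hρ, ← ENNReal.rpow_mul, mul_neg, mul_one_div_cancel hq0.ne', ENNReal.rpow_neg_one]
      have e3 : (K1 * N) ^ (1 / p) * S1 * 2 = R * τ := by
        rw [hR, hL, mul_assoc _ τ⁻¹, ENNReal.inv_mul_cancel hτ0 hτt, ENNReal.mul_rpow_of_nonneg _ _ (by positivity)]
        ring
      have e4 : (K1 * N) ^ (1 / p) * ρ ^ (-(1 / q)) * S1 = τ / 2 := by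
        rw [ENNReal.eq_div_iff (by simp) (by simp), e2]
        calc 2 * ((K1 * N) ^ (1 / p) * R⁻¹ * S1) = R⁻¹ * ((K1 * N) ^ (1 / p) * S1 * 2) := by ring
          _ = (R⁻¹ * R) * τ := by rw [e3]; ring
          _ = τ := by rw [ENNReal.inv_mul_cancel hR0 hRt, one_mul]
      rw [e1, e4, ENNReal.add_halves]
    exact absurd (hs.trans this) (not_le.2 hxτ)
  refine (measure_mono_ae hsub).trans ((hun ρ (c * τ) hρ0 hρt hl0 hlt).trans (le_of_eq ?_))
  have hτi0 : τ⁻¹ ≠ 0 := ENNReal.inv_ne_zero.2 hτt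
  have e1 : ρ ^ (1 - p / q) = L ^ (q - p) * N ^ ((q - p) / p) * τ ^ (-(q - p)) := by
    rw [hρ, ← ENNReal.rpow_mul, hR]
    have : q * (1 - p / q) = q - p := by field_simp
    have hqp : 0 ≤ q - p := by linarith
    rw [this, ENNReal.mul_rpow_of_nonneg _ _ hqp, ENNReal.mul_rpow_of_nonneg _ _ hqp, ← ENNReal.rpow_mul,
      ENNReal.inv_rpow, ← ENNReal.rpow_neg]
    congr 3
    ring
  have e2 : (c * τ) ^ (-p) = c ^ (-p) * τ ^ (-p) := ENNReal.mul_rpow_of_ne_zero hc0 hτ0 _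
  have e3 : τ ^ (-q) = τ ^ (-p) * τ ^ (-(q - p)) := by
    rw [← ENNReal.rpow_add _ _ hτ0 hτt]; congr 1; ring
  have e4 : N ^ (q / p) = N ^ ((q - p) / p) * N := by
    conv_rhs => rw [← ENNReal.rpow_one N, ← ENNReal.rpow_mul, ← ENNReal.rpow_add _ _ hN0 hNt]
    congr 1
    field_simp; ring
  rw [e1, e2, e3, e4]
  ring

end BCP

namespace BCP

lemma emb_toLp (n : ℕ) : MeasurableEmbedding (WithLp.toLp 2 : (Fin n → ℝ) → ESp n) :=
  (MeasurableEquiv.toLp 2 (Fin n → ℝ)).measurableEmbedding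

lemma lint_toLp {n : ℕ} (F : ESp n → ℝ≥0∞) : ∫⁻ x, F x = ∫⁻ x : Fin n → ℝ, F (WithLp.toLp 2 x) :=
  ((PiLp.volume_preserving_toLp (Fin n)).lintegral_comp_emb (emb_toLp n) F).symm

lemma setLint_toLp {n : ℕ} (F : ESp n → ℝ≥0∞) (E : Set (ESp n)) : 
    ∫⁻ x in E, F x = ∫⁻ x in {x : Fin n → ℝ | WithLp.toLp 2 x ∈ E}, F (WithLp.toLp 2 x) :=
  ((PiLp.volume_preserving_toLp (Fin n)).setLIntegral_comp_preimage_emb (emb_toLp n) F E).symm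

lemma ae_toLp {n : ℕ} {P : ESp n → Prop} (h : ∀ᵐ x, P x) : ∀ᵐ x : Fin n → ℝ, P (WithLp.toLp 2 x) :=
  (PiLp.volume_preserving_toLp (Fin n)).quasiMeasurePreserving.ae h

/-- the positive modification of a weight, on `Fin n → ℝ` -/
def md {n : ℕ} (w : ESp n → ℝ) (x : Fin n → ℝ) : ℝ≥0∞ :=
  if 0 < w (WithLp.toLp 2 x) then ENNReal.ofReal (w (WithLp.toLp 2 x)) else 1

lemma md_ae {n : ℕ} (w : ESp n → ℝ) (hw : ∀ᵐ x, 0 < w x) :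
    ∀ᵐ x : Fin n → ℝ, 0 < w (WithLp.toLp 2 x) ∧ md w x = ENNReal.ofReal (w (WithLp.toLp 2 x)) := by
  filter_upwards [ae_toLp hw] with x hx
  exact ⟨hx, if_pos hx⟩

lemma md_Wt {n : ℕ} (w : ESp n → ℝ) (hm : Measurable w) (hw : ∀ᵐ x, 0 < w x) (C : ℝ≥0∞) (hC : C < ⊤)
    (hA : A1Const w C) : Wt (md w) C := by
  have hmt : Measurable (fun x : Fin n → ℝ => w (WithLp.toLp 2 x)) := hm.comp (WithLp.measurable_toLp 2 _)
  refine ⟨?_, ?_, ?_, hC.ne, ?_⟩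
  · unfold md
    exact Measurable.ite (measurableSet_lt measurable_const hmt) hmt.ennreal_ofReal measurable_const
  · intro x
    unfold md
    split_ifs with h
    · simpa using h
    · simp
  · intro x
    unfold md
    split_ifs with h
    · simp
    · simp
  · intro x r hr
    set Q : Set (ESp n) := {y | ∀ i, x i - r ≤ y i ∧ y i ≤ x i - r + 2 * r} with hQ
    have hcube : IsCube Q := ⟨fun i => x i - r, 2 * r, by positivity, rfl⟩
    have hpre : {y : Fin n → ℝ | WithLp.toLp 2 y ∈ Q} = Metric.closedBall x r := by
      ext y
      rw [Metric.mem_closedBall, dist_pi_le_iff hr.le]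
      simp only [hQ, mem_ofPred_eq, Real.dist_eq, abs_le]
      refine forall_congr' fun i => ?_
      constructor
      · rintro ⟨h1, h2⟩; constructor <;> linarith
      · rintro ⟨h1, h2⟩; constructor <;> linarith
    have hQm : MeasurableSet Q := by
      have : Q = (WithLp.ofLp : ESp n → _) ⁻¹' (Metric.closedBall x r) := by
        rw [← hpre]; rfl
      rw [this]
      exact WithLp.measurable_ofLp 2 _ Metric.isClosed_closedBall.measurableSet
    have hvol : volume Q = volume (Metric.closedBall x r) := by
      rw [← hpre]
      exact ((PiLp.volume_preserving_toLp (Fin n)).measure_preimage_emb (emb_toLp n) Q).symm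
    have hW : wMeas w Q = W (md w) (Metric.closedBall x r) := by
      unfold wMeas
      rw [setLint_toLp, hpre, withDensity_apply _ Metric.isClosed_closedBall.measurableSet]
      refine lintegral_congr_ae ?_
      refine ae_restrict_of_ae ?_
      filter_upwards [md_ae w hw] with y hy
      exact hy.2.symm
    have h1 := hA Q hcube
    have hvol0 : volume (Metric.closedBall x r) ≠ 0 := by
      rw [vol_ball x r hr.le]; exact pow_ne_zero _ (by simp; positivity)
    have hvolt : volume (Metric.closedBall x r) ≠ ⊤ := by
      rw [vol_ball x r hr.le]; exact ENNReal.pow_ne_top ENNReal.ofReal_ne_top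
    have h2 : ∀ᵐ y, y ∈ Q → essInf (fun x => ENNReal.ofReal (w x)) (volume.restrict Q) ≤ ENNReal.ofReal (w y) := by
      rw [← ae_restrict_iff' hQm]
      exact ae_essInf_le
    filter_upwards [ae_toLp h2, md_ae w hw] with y hy hy2 hyB
    rw [← hpre] at hyB
    have h3 := hy hyB
    rw [hy2.2]
    rw [hvol, hW] at h1
    set e := essInf (fun x => ENNReal.ofReal (w x)) (volume.restrict Q)
    calc W (md w) (Metric.closedBall x r) = volume (Metric.closedBall x r) * ((volume (Metric.closedBall x r))⁻¹ * W (md w) (Metric.closedBall x r)) := by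
          rw [← mul_assoc, ENNReal.mul_inv_cancel hvol0 hvolt, one_mul]
      _ ≤ volume (Metric.closedBall x r) * (C * ENNReal.ofReal (w (WithLp.toLp 2 y))) := by
          exact mul_le_mul' le_rfl (h1.trans (mul_le_mul' le_rfl h3))
      _ = _ := by ring

theorem core0 {n : ℕ} (hn : 0 < n) (p q : ℝ) (hp : 1 ≤ p) (hpq : p < q)
    (u V : (Fin n → ℝ) → ℝ≥0∞) (C CV : ℝ≥0∞) (hu : Wt u C) (hV : Wt V CV) :
    ∃ K : ℝ≥0∞, K ≠ ⊤ ∧ ∀ f : (Fin n → ℝ) → ℝ≥0∞, Measurable f → ∀ τ : ℝ≥0∞, τ ≠ 0 → τ ≠ ⊤ →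
      (∫⁻ y, f y ^ p * V y ^ (p / q) * u y ^ (p / q)) ≠ ⊤ →
      W (fun x => u x * V x) {x | τ < ∑' k, aa p q f (fun x => V x ^ (p / q)) k x} ≤
        K * τ ^ (-q) * (∫⁻ y, f y ^ p * V y ^ (p / q) * u y ^ (p / q)) ^ (q / p) := by
  obtain ⟨K, hK, h⟩ := core hn p q hp hpq u V C CV hu hV
  refine ⟨K, hK, fun f hf τ hτ0 hτt hNt => ?_⟩
  by_cases hN0 : (∫⁻ y, f y ^ p * V y ^ (p / q) * u y ^ (p / q)) = 0
  · have hum := hu.meas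
    have hVm := hV.meas
    rw [lintegral_eq_zero_iff (by fun_prop)] at hN0
    have hz : (fun y => f y * V y ^ (p / q)) =ᵐ[volume] 0 := by
      filter_upwards [hN0] with y hy
      simp only [Pi.zero_apply, mul_eq_zero] at hy ⊢
      rcases hy with (hy | hy) | hy
      · left
        rw [ENNReal.rpow_eq_zero_iff] at hy
        rcases hy with hy | hy
        · exact hy.1
        · linarith [hy.2]
      · right; exact hy
      · exact absurd hy (ENNReal.rpow_pos (pos_iff_ne_zero.2 (hu.ne0 y)) (hu.net y)).ne'
    have hW : W (fun y => f y * V y ^ (p / q)) = 0 := by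
      unfold W
      rw [withDensity_congr_ae hz, withDensity_zero]
    have : {x | τ < ∑' k, aa p q f (fun x => V x ^ (p / q)) k x} = ∅ := by
      ext x
      simp [aa, hW]
    rw [this]
    simp
  · exact h f hf τ hτ0 hτt hN0 hNt

lemma kernel_bound {n : ℕ} (hn : 0 < n) (δ β : ℝ) (hδ : 0 < δ) (hβ : n * β = -δ) (x y : Fin n → ℝ) (hxy : x ≠ y) :
    (ENNReal.ofReal (dist x y)) ^ (-δ) ≤ 4 ^ δ * ∑' k : ℤ, (B k x).indicator (fun _ => m n k ^ β) y := by
  have hd : 0 < dist x y := dist_pos.2 hxy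
  obtain ⟨j, hj1, hj2⟩ := exists_mem_Ioc_zpow hd (show (1:ℝ) < 2 by norm_num)
  have hmem : y ∈ B (j + 1) x := by
    rw [B, Metric.mem_closedBall, dist_comm]; exact hj2
  refine le_trans ?_ (mul_le_mul' le_rfl (ENNReal.le_tsum (j + 1)))
  rw [indicator_of_mem hmem]
  have hM : m n (j + 1) ^ β = (ENNReal.ofReal (2 * 2 ^ (j + 1))) ^ (-δ) := by
    unfold m
    rw [← ENNReal.rpow_natCast, ← ENNReal.rpow_mul, hβ]
  rw [hM]
  have h1 : ENNReal.ofReal (2 * 2 ^ (j + 1)) ≤ 4 * ENNReal.ofReal (dist x y) := by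
    have : (4 : ℝ≥0∞) = ENNReal.ofReal 4 := by norm_num
    rw [this, ← ENNReal.ofReal_mul (by norm_num)]
    apply ENNReal.ofReal_le_ofReal
    rw [zpow_add_one₀ (by norm_num)]
    linarith
  have h2 := inv_le_of_le_mul (ENNReal.ofReal_pos.2 (by positivity)).ne' ENNReal.ofReal_ne_top h1
  calc (ENNReal.ofReal (dist x y)) ^ (-δ) = ((ENNReal.ofReal (dist x y))⁻¹) ^ δ := by
        rw [ENNReal.inv_rpow, ENNReal.rpow_neg]
    _ ≤ (4 * (ENNReal.ofReal (2 * 2 ^ (j + 1)))⁻¹) ^ δ := by gcongr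
    _ = _ := by rw [ENNReal.mul_rpow_of_nonneg _ _ hδ.le, ENNReal.inv_rpow, ENNReal.rpow_neg]

lemma dist_sup_le {n : ℕ} (x y : Fin n → ℝ) : dist x y ≤ dist (WithLp.toLp 2 x : ESp n) (WithLp.toLp 2 y) := by
  refine (dist_pi_le_iff dist_nonneg).2 fun i => ?_
  have := PiLp.norm_apply_le (WithLp.toLp 2 x - WithLp.toLp 2 y : ESp n) i
  rw [dist_eq_norm, dist_eq_norm]
  exact this

lemma fracI_bound {n : ℕ} (hn : 0 < n) (α p q : ℝ) (hα : α < (n : ℝ)) (hq : 1 / q = 1 / p - α / (n : ℝ))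
    (f v : ESp n → ℝ) (F v' : (Fin n → ℝ) → ℝ≥0∞) (hF : Measurable F) (hv' : Measurable v')
    (hFf : ∀ᵐ y, F y = ENNReal.ofReal |f (WithLp.toLp 2 y)|)
    (hvv : ∀ᵐ y, 0 < v (WithLp.toLp 2 y) ∧ v' y = ENNReal.ofReal (v (WithLp.toLp 2 y))) (x : Fin n → ℝ) :
    ENNReal.ofReal (fracI α (fun y => f y * v y) (WithLp.toLp 2 x)) ≤ 
      4 ^ (n - α) * ∑' k : ℤ, m n k ^ (1 / p - 1 / q - 1) * W (fun y => F y * v' y) (B k x) := by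
  have hn' : (0:ℝ) < n := by exact_mod_cast hn
  set β := 1 / p - 1 / q - 1 with hβ
  have hβ' : n * β = -(n - α) := by
    have : β = α / n - 1 := by rw [hβ, hq]; ring
    rw [this]; field_simp; ring
  have hδ : 0 < (n:ℝ) - α := by linarith
  calc ENNReal.ofReal (fracI α (fun y => f y * v y) (WithLp.toLp 2 x)) 
      ≤ ‖fracI α (fun y => f y * v y) (WithLp.toLp 2 x)‖ₑ := by
        rw [Real.enorm_eq_ofReal_abs]; exact ENNReal.ofReal_le_ofReal (le_abs_self _)
    _ ≤ ∫⁻ y, ‖f y * v y / dist (WithLp.toLp 2 x) y ^ ((n : ℝ) - α)‖ₑ := enorm_integral_le_lintegral_enorm _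
    _ = ∫⁻ y : Fin n → ℝ, ‖f (WithLp.toLp 2 y) * v (WithLp.toLp 2 y) / dist (WithLp.toLp 2 x : ESp n) (WithLp.toLp 2 y) ^ ((n : ℝ) - α)‖ₑ := lint_toLp _
    _ ≤ ∫⁻ y : Fin n → ℝ, 4 ^ (n - α) * ∑' k : ℤ, m n k ^ β * (B k x).indicator (fun y => F y * v' y) y := by
        refine lintegral_mono_ae ?_
        filter_upwards [hFf, hvv] with y hy1 hy2
        by_cases hxy : x = y
        · rw [hxy, dist_self, Real.zero_rpow hδ.ne']; simp
        have hk := kernel_bound hn (n - α) β hδ hβ' x y hxy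
        have hd : 0 < dist x y := dist_pos.2 hxy
        have hde := dist_sup_le x y
        calc _ = F y * v' y * ENNReal.ofReal (dist (WithLp.toLp 2 x : ESp n) (WithLp.toLp 2 y) ^ ((n : ℝ) - α))⁻¹ := by
              rw [hy1, hy2.2, Real.enorm_eq_ofReal_abs, abs_div, abs_mul, div_eq_mul_inv, ENNReal.ofReal_mul (by positivity),
                ENNReal.ofReal_mul (by positivity), abs_of_pos hy2.1, abs_of_nonneg (by positivity : 0 ≤ dist (WithLp.toLp 2 x : ESp n) (WithLp.toLp 2 y) ^ ((n : ℝ) - α))]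
          _ ≤ F y * v' y * (ENNReal.ofReal (dist x y)) ^ (-((n : ℝ) - α)) := by
              gcongr
              rw [ENNReal.ofReal_rpow_of_pos hd, Real.rpow_neg hd.le]
              apply ENNReal.ofReal_le_ofReal
              gcongr
          _ ≤ F y * v' y * (4 ^ (n - α) * ∑' k : ℤ, (B k x).indicator (fun _ => m n k ^ β) y) := by gcongr
          _ = _ := by
              rw [mul_left_comm, ← ENNReal.tsum_mul_left]
              congr 1
              refine tsum_congr fun k => ?_
              by_cases hm : y ∈ B k x
              · rw [indicator_of_mem hm, indicator_of_mem hm, mul_comm]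
              · rw [indicator_of_notMem hm, indicator_of_notMem hm, mul_zero, mul_zero]
    _ = _ := by
        have hmi : ∀ k, Measurable ((B k x).indicator (fun y => F y * v' y)) := fun k => (hF.mul hv').indicator (meas_B k x)
        rw [lintegral_const_mul _ (Measurable.tsum fun k => (hmi k).const_mul _), lintegral_tsum (fun k => ((hmi k).const_mul _).aemeasurable)]
        congr 1
        refine tsum_congr fun k => ?_
        rw [lintegral_const_mul _ (hmi k), withDensity_apply _ (meas_B k x), lintegral_indicator (meas_B k x)]

end BCP

namespace BCP

lemma fracI_zero {n : ℕ} (hn : 0 < n) (α : ℝ) (f v : ESp n → ℝ) (hv : Measurable v) (hv0 : ∀ᵐ x, 0 < v x)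
    (hf : ¬ AEMeasurable f volume) (x : ESp n) : fracI α (fun y => f y * v y) x = 0 := by
  unfold fracI
  refine integral_undef fun hi => hf ?_
  have h1 := hi.aestronglyMeasurable.aemeasurable
  have : Nonempty (Fin n) := ⟨⟨0, hn⟩⟩
  have h2 : AEMeasurable (fun y => (f y * v y / dist x y ^ ((n : ℝ) - α)) * (dist x y ^ ((n : ℝ) - α) / v y)) volume := by
    refine h1.mul ?_
    have : Measurable fun y : ESp n => dist x y := by fun_prop
    fun_prop
  refine h2.congr ?_
  have hne : ∀ᵐ y : ESp n, y ≠ x := by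
    rw [ae_iff]; simp
  filter_upwards [hv0, hne] with y hy hyx
  have hd : 0 < dist x y := dist_pos.2 (Ne.symm hyx)
  have := (Real.rpow_pos_of_pos hd ((n : ℝ) - α)).ne'
  field_simp

end BCP

/-- **Berra–Carena–Pradolini, fractional integral case.**  Let `0 < α < n`, `1 ≤ p < n/α`
and `1/q = 1/p - α/n`.  If `u ∈ A₁` and `v^{q/p} ∈ A₁`, then there is `C > 0` such that
for every `f` and `t > 0`,
`(uv^{q/p})({x : I_α(fv)(x)/v(x) > t})^{1/q} ≤ (C/t) (∫ |f|^p u^{p/q} v)^{1/p}`. -/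
theorem BCP_fractional_integral {n : ℕ} (hn : 0 < n) (α p q : ℝ)
    (hα0 : 0 < α) (hα : α < (n : ℝ)) (hp1 : 1 ≤ p) (hp2 : p < (n : ℝ) / α)
    (hq : 1 / q = 1 / p - α / (n : ℝ))
    (u v : ESp n → ℝ) (hu : IsWeight u) (hv : IsWeight v)
    (hu1 : IsA1 u) (hv1 : IsA1 (fun x => v x ^ (q / p))) :
    ∃ C : ℝ≥0∞, 0 < C ∧ C < ⊤ ∧
      ∀ (f : ESp n → ℝ) (t : ℝ), 0 < t →
        (wMeas (fun x => u x * v x ^ (q / p))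
            {x : ESp n | t < fracI α (fun y => f y * v y) x / v x}) ^ (1 / q)
          ≤ (C / ENNReal.ofReal t) *
              (∫⁻ x, ENNReal.ofReal (|f x| ^ p * u x ^ (p / q) * v x)) ^ (1 / p) := by
  have hn' : (0:ℝ) < n := by exact_mod_cast hn
  have hp0 : 0 < p := by linarith
  have hαn : 0 < α / n := by positivity
  have hqp : 0 < 1 / q := by
    rw [hq, sub_pos, div_lt_div_iff₀ hn' hp0]
    rw [lt_div_iff₀ hα0] at hp2
    linarith
  have hq0 : 0 < q := by simpa using hqp
  have hpq : p < q := by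
    have : 1 / q < 1 / p := by rw [hq]; linarith
    exact (one_div_lt_one_div hq0 hp0).1 this
  obtain ⟨hum, hunn, hu0, -⟩ := hu
  obtain ⟨hvm, hvnn, hv0, -⟩ := hv
  obtain ⟨C, hC, hCA⟩ := hu1
  obtain ⟨CV, hCV, hCVA⟩ := hv1
  have hVm : Measurable (fun x => v x ^ (q / p)) := by fun_prop
  have hV0 : ∀ᵐ x, 0 < v x ^ (q / p) := by
    filter_upwards [hv0] with x hx
    exact Real.rpow_pos_of_pos hx _
  have hU := BCP.md_Wt u hum hu0 C hC hCA
  have hV := BCP.md_Wt _ hVm hV0 CV hCV hCVA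
  have hUae := BCP.md_ae u hu0
  have hVae := BCP.md_ae _ hV0
  set U := BCP.md u
  set V := BCP.md (fun x => v x ^ (q / p))
  have hUm' := hU.meas
  have hVm' := hV.meas
  have hvae : ∀ᵐ y, 0 < v (WithLp.toLp 2 y) ∧ V y ^ (p / q) = ENNReal.ofReal (v (WithLp.toLp 2 y)) := by
    filter_upwards [BCP.ae_toLp hv0, hVae] with y hy hy2
    refine ⟨hy, ?_⟩
    rw [hy2.2, ENNReal.ofReal_rpow_of_pos hy2.1, ← Real.rpow_mul hy.le]
    congr 1
    rw [show q / p * (p / q) = 1 by field_simp, Real.rpow_one]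
  obtain ⟨K, hKt, hK⟩ := BCP.core0 hn p q hp1 hpq U V C CV hU hV
  have hc0 : (4 : ℝ≥0∞) ^ ((n:ℝ) - α) ≠ 0 := (ENNReal.rpow_pos (by norm_num) (by norm_num)).ne'
  have hct : (4 : ℝ≥0∞) ^ ((n:ℝ) - α) ≠ ⊤ := ENNReal.rpow_ne_top_of_nonneg (by linarith) (by norm_num)
  set c0 := (4 : ℝ≥0∞) ^ ((n:ℝ) - α) with hc0d
  have hKq : K ^ (1 / q) ≠ ⊤ := ENNReal.rpow_ne_top_of_nonneg hqp.le hKt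
  refine ⟨K ^ (1 / q) * c0 + 1, by positivity, (ENNReal.add_ne_top.2 ⟨ENNReal.mul_ne_top hKq hct, ENNReal.one_ne_top⟩).lt_top, ?_⟩
  intro f t ht
  by_cases hf : AEMeasurable f volume
  swap
  · have : {x : ESp n | t < fracI α (fun y => f y * v y) x / v x} = ∅ := by
      ext x
      simp only [mem_ofPred_eq, mem_empty_iff_false, iff_false, not_lt]
      rw [BCP.fracI_zero hn α f v hvm hv0 hf x, zero_div]; exact ht.le
    rw [this]
    simp only [wMeas, Measure.restrict_empty, lintegral_zero_measure]
    rw [ENNReal.zero_rpow_of_pos hqp]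
    exact zero_le
  have hfm : AEMeasurable (fun y : Fin n → ℝ => ENNReal.ofReal |f (WithLp.toLp 2 y)|) volume := by
    have h1 : AEMeasurable (fun x => ENNReal.ofReal |f x|) volume :=
      (continuous_abs.measurable.comp_aemeasurable hf).ennreal_ofReal
    exact h1.comp_quasiMeasurePreserving (PiLp.volume_preserving_toLp (Fin n)).quasiMeasurePreserving
  set F := hfm.mk with hF
  have hFm : Measurable F := hfm.measurable_mk
  have hFae : ∀ᵐ y, F y = ENNReal.ofReal |f (WithLp.toLp 2 y)| := hfm.ae_eq_mk.symm
  have hN : ∫⁻ x, ENNReal.ofReal (|f x| ^ p * u x ^ (p / q) * v x) = ∫⁻ y, F y ^ p * V y ^ (p / q) * U y ^ (p / q) := by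
    rw [BCP.lint_toLp]
    refine lintegral_congr_ae ?_
    filter_upwards [hFae, hvae, hUae] with y h1 h2 h3
    rw [h1, h2.2, h3.2, ENNReal.ofReal_mul (by have := h3.1; positivity), ENNReal.ofReal_mul (by positivity),
      ENNReal.ofReal_rpow_of_nonneg (abs_nonneg _) hp0.le, ENNReal.ofReal_rpow_of_pos h3.1]
    ring
  rw [hN]
  set N := ∫⁻ y, F y ^ p * V y ^ (p / q) * U y ^ (p / q) with hNd
  have ht0 : ENNReal.ofReal t ≠ 0 := (ENNReal.ofReal_pos.2 ht).ne'
  have htt : ENNReal.ofReal t ≠ ⊤ := ENNReal.ofReal_ne_top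
  by_cases hNt : N = ⊤
  · rw [hNt, ENNReal.top_rpow_of_pos (by positivity), ENNReal.mul_top]
    · exact le_top
    · exact ENNReal.div_ne_zero.2 ⟨by simp, htt⟩
  set τ := ENNReal.ofReal t / c0 with hτ
  have hτ0 : τ ≠ 0 := ENNReal.div_ne_zero.2 ⟨ht0, hct⟩
  have hτt : τ ≠ ⊤ := ENNReal.div_ne_top htt hc0
  have hmain := hK F hFm τ hτ0 hτt hNt
  rw [← hNd] at hmain
  set S := {x | τ < ∑' k, BCP.aa p q F (fun x => V x ^ (p / q)) k x} with hS
  have hSm : MeasurableSet S := 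
    measurableSet_lt measurable_const (Measurable.tsum fun k => BCP.meas_aa p q F _ (by fun_prop) k)
  have hbound : wMeas (fun x => u x * v x ^ (q / p)) {x : ESp n | t < fracI α (fun y => f y * v y) x / v x} ≤ 
      BCP.W (fun x => U x * V x) S := by
    unfold wMeas
    rw [BCP.setLint_toLp, withDensity_apply _ hSm]
    have hsub : {x : Fin n → ℝ | WithLp.toLp 2 x ∈ {x : ESp n | t < fracI α (fun y => f y * v y) x / v x}} ≤ᵐ[volume] S := by
      filter_upwards [hvae] with x hx hxt
      have hxt' : t < fracI α (fun y => f y * v y) (WithLp.toLp 2 x) / v (WithLp.toLp 2 x) := hxt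
      have hb := BCP.fracI_bound hn α p q hα hq f v F (fun x => V x ^ (p / q)) hFm (by fun_prop) hFae hvae x
      show τ < _
      rw [lt_div_iff₀ hx.1] at hxt'
      have h1 := (ENNReal.ofReal_lt_ofReal_iff (lt_trans (mul_pos ht hx.1) hxt')).2 hxt'
      rw [ENNReal.ofReal_mul ht.le] at h1
      have h2 := h1.trans_le hb
      rw [← hx.2, ← hc0d] at h2
      have hvx0 : V x ^ (p / q) ≠ 0 := by rw [hx.2]; exact (ENNReal.ofReal_pos.2 hx.1).ne'
      have hvxt : V x ^ (p / q) ≠ ⊤ := by rw [hx.2]; exact ENNReal.ofReal_ne_top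
      have e1 : ∑' k, BCP.aa p q F (fun x => V x ^ (p / q)) k x = (V x ^ (p / q))⁻¹ * 
          ∑' k : ℤ, BCP.m n k ^ (1 / p - 1 / q - 1) * BCP.W (fun y => F y * V y ^ (p / q)) (BCP.B k x) := by
        rw [← ENNReal.tsum_mul_left]
        refine tsum_congr fun k => ?_
        unfold BCP.aa
        rw [mul_assoc]
      rw [e1, hτ, ENNReal.div_lt_iff (Or.inl hc0) (Or.inl hct)]
      rw [← ENNReal.lt_div_iff_mul_lt (Or.inl hvx0) (Or.inl hvxt)] at h2
      refine h2.trans_le (le_of_eq ?_)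
      rw [div_eq_mul_inv]; ring
    refine (lintegral_mono' (Measure.restrict_mono_ae hsub) le_rfl).trans (le_of_eq ?_)
    refine lintegral_congr_ae (ae_restrict_of_ae ?_)
    filter_upwards [hUae, hVae] with x h1 h2
    rw [h1.2, h2.2, ENNReal.ofReal_mul h1.1.le]
  calc _ ≤ (K * τ ^ (-q) * N ^ (q / p)) ^ (1 / q) := by
        gcongr
        exact hbound.trans hmain
    _ = K ^ (1 / q) * τ⁻¹ * N ^ (1 / p) := by
        rw [ENNReal.mul_rpow_of_nonneg _ _ hqp.le, ENNReal.mul_rpow_of_nonneg _ _ hqp.le, ← ENNReal.rpow_mul, ← ENNReal.rpow_mul]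
        rw [show -q * (1 / q) = -1 by field_simp, show q / p * (1 / q) = 1 / p by field_simp, ENNReal.rpow_neg_one]
    _ = (K ^ (1 / q) * c0 / ENNReal.ofReal t) * N ^ (1 / p) := by
        rw [hτ, ENNReal.inv_div (Or.inl hct) (Or.inl hc0), mul_div_assoc]
    _ ≤ _ := by
        gcongr
        exact le_self_add


end
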